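/- arXiv:1302.4106 — 4 statements merged into one kernel-verified Lean document; each statement's English description precedes it below -/
import Mathlib

section
/- Let K₁ and K₂ be two disjoint compact convex subsets of ℂⁿ, let V ⊆ ℂⁿ be an open set with K₁ ∪ K₂ ⊆ V, and let h be a holomorphic function on V. Then for every ε > 0 there exists a holomorphic polynomial Q on ℂⁿ such that sup_{z ∈ K₁ ∪ K₂} ‖h(z) − Q(z)‖ < ε. -/
open Set Filter Topology

noncomputable section

/-- Evaluation of a multivariate polynomial as a function on `ℂⁿ = Fin n → ℂ`. -/
def mvEval {n : ℕ} (p : MvPolynomial (Fin n) ℂ) : (Fin n → ℂ) → ℂ :=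
  fun z => MvPolynomial.eval z p

/-- The polynomially convex hull of a set in `ℂⁿ`. -/
def polyHull {n : ℕ} (K : Set (Fin n → ℂ)) : Set (Fin n → ℂ) :=
  {z | ∀ p : MvPolynomial (Fin n) ℂ, ‖mvEval p z‖ ≤ sSup ((fun w => ‖mvEval p w‖) '' K)}

/-- A set in `ℂⁿ` is polynomially convex if it equals its polynomially convex hull. -/
def IsPolyConvex {n : ℕ} (K : Set (Fin n → ℂ)) : Prop := polyHull K = K

/-- The polynomially convex hull of a subset of `ℂ`. -/
def polyHull1 (F : Set ℂ) : Set ℂ :=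
  {z | ∀ p : Polynomial ℂ, ‖p.eval z‖ ≤ sSup ((fun w => ‖p.eval w‖) '' F)}

/-- A subset of `ℂ` is polynomially convex if it equals its polynomially convex hull. -/
def IsPolyConvex1 (F : Set ℂ) : Prop := polyHull1 F = F

/-- Partial derivative in the `i`-th coordinate direction. -/
def pd {n : ℕ} (i : Fin n) (f : (Fin n → ℂ) → ℂ) : (Fin n → ℂ) → ℂ :=
  fun z => fderiv ℂ f z (Pi.single i 1)

/-- Iterated partial derivative `D^ℓ = ∂^{ℓ₁+⋯+ℓₙ}/∂z₁^{ℓ₁}⋯∂zₙ^{ℓₙ}`. -/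
def Dml {n : ℕ} (ℓ : Fin n → ℕ) (f : (Fin n → ℂ) → ℂ) : (Fin n → ℂ) → ℂ :=
  (List.finRange n).foldr (fun i g => (pd i)^[ℓ i] g) f

/-- Partial sums `S_λ` of a Taylor-type series around `ζ`, with coefficients computed from a
given family `g` of (extended) partial derivatives: the coefficient of the monomial
`(z-ζ)^{N_j}` is `g (N_j) ζ / (N_{j,1}! ⋯ N_{j,n}!)`. -/
def pSumExt {n : ℕ} (Nj : ℕ → Fin n → ℕ) (g : (Fin n → ℕ) → (Fin n → ℂ) → ℂ)
    (ζ : Fin n → ℂ) (lam : ℕ) : (Fin n → ℂ) → ℂ :=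
  fun z => ∑ j ∈ Finset.range (lam + 1),
    (((∏ i, Nat.factorial (Nj j i) : ℕ) : ℂ))⁻¹ * g (Nj j) ζ * ∏ i, (z i - ζ i) ^ (Nj j i)

/-- Partial sums `S_λ(f,ζ)` of the Taylor development of `f` around `ζ`. -/
def pSum {n : ℕ} (Nj : ℕ → Fin n → ℕ) (f : (Fin n → ℂ) → ℂ)
    (ζ : Fin n → ℂ) (lam : ℕ) : (Fin n → ℂ) → ℂ :=
  pSumExt Nj (fun ℓ => Dml ℓ f) ζ lam

/-- The space `O(Ω)` of holomorphic functions on `Ω`. -/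
def Ospace (n : ℕ) (Ω : Set (Fin n → ℂ)) : Type :=
  {f : (Fin n → ℂ) → ℂ // DifferentiableOn ℂ f Ω}

/-- Topology of uniform convergence on compact subsets of `Ω` on `O(Ω)` (the compact-open
topology induced via restriction to `Ω`). -/
instance (n : ℕ) (Ω : Set (Fin n → ℂ)) : TopologicalSpace (Ospace n Ω) :=
  TopologicalSpace.induced
    (fun f : Ospace n Ω =>
      (⟨Ω.restrict f.1, continuousOn_iff_continuous_restrict.mp f.2.continuousOn⟩ : C(Ω, ℂ)))
    inferInstance

/-- Membership in `A^∞(Ω)`: `f` is holomorphic on `Ω` and each partial derivative `D^ℓ f`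
extends continuously to the closure of `Ω`. -/
def AinfMem (n : ℕ) (Ω : Set (Fin n → ℂ)) (f : (Fin n → ℂ) → ℂ) : Prop :=
  DifferentiableOn ℂ f Ω ∧
    ∀ ℓ : Fin n → ℕ, ∃ g : (Fin n → ℂ) → ℂ,
      ContinuousOn g (closure Ω) ∧ Set.EqOn g (Dml ℓ f) Ω

/-- The space `A^∞(Ω)`. -/
def AinfSpace (n : ℕ) (Ω : Set (Fin n → ℂ)) : Type :=
  {f : (Fin n → ℂ) → ℂ // AinfMem n Ω f}

/-- The chosen continuous extension of `D^ℓ f` to the closure of `Ω`, for `f ∈ A^∞(Ω)`.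
(Its restriction to the closure of `Ω` is uniquely determined.) -/
def AinfExt {n : ℕ} {Ω : Set (Fin n → ℂ)} (f : AinfSpace n Ω) (ℓ : Fin n → ℕ) :
    (Fin n → ℂ) → ℂ :=
  Classical.choose (f.2.2 ℓ)

lemma AinfExt_continuousOn {n : ℕ} {Ω : Set (Fin n → ℂ)} (f : AinfSpace n Ω) (ℓ : Fin n → ℕ) :
    ContinuousOn (AinfExt f ℓ) (closure Ω) :=
  (Classical.choose_spec (f.2.2 ℓ)).1

lemma AinfExt_eqOn {n : ℕ} {Ω : Set (Fin n → ℂ)} (f : AinfSpace n Ω) (ℓ : Fin n → ℕ) :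
    Set.EqOn (AinfExt f ℓ) (Dml ℓ f.1) Ω :=
  (Classical.choose_spec (f.2.2 ℓ)).2

/-- Topology on `A^∞(Ω)`: uniform convergence of every partial derivative on every compact
subset of the closure of `Ω`. -/
instance (n : ℕ) (Ω : Set (Fin n → ℂ)) : TopologicalSpace (AinfSpace n Ω) :=
  TopologicalSpace.induced
    (fun f : AinfSpace n Ω => fun ℓ : Fin n → ℕ =>
      (⟨(closure Ω).restrict (AinfExt f ℓ),
        continuousOn_iff_continuous_restrict.mp (AinfExt_continuousOn f ℓ)⟩ :
          C(closure Ω, ℂ)))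
    inferInstance

/-- A smooth compact curve in `ℂⁿ`: the image of an injective `C^∞` map with
nowhere-vanishing derivative, defined on a compact interval (an arc) or on the
circle (a closed curve, modelled by a 1-periodic map). -/
def IsSmoothCompactCurve {n : ℕ} (K : Set (Fin n → ℂ)) : Prop :=
  ∃ γ : ℝ → (Fin n → ℂ), ContDiff ℝ (⊤ : ℕ∞) γ ∧ (∀ t, deriv γ t ≠ 0) ∧ K = γ '' Set.Icc 0 1 ∧
    (Set.InjOn γ (Set.Icc 0 1) ∨ (Function.Periodic γ 1 ∧ Set.InjOn γ (Set.Ico 0 1)))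

/-- A disjoint union of finitely many smooth compact curves. -/
def IsFiniteUnionOfSmoothCurves {n : ℕ} (K : Set (Fin n → ℂ)) : Prop :=
  ∃ (m : ℕ) (C : Fin m → Set (Fin n → ℂ)),
    (∀ i, IsSmoothCompactCurve (C i)) ∧ Pairwise (Function.onFun Disjoint C) ∧ K = ⋃ i, C i


/-! ### Circle integrals with values in `C(X, ℂ)` -/

/-- Circle integrals commute with continuous linear maps. -/
theorem oka_circleIntegral_comm {E F : Type*} [NormedAddCommGroup E] [NormedSpace ℂ E]
    [CompleteSpace E] [NormedAddCommGroup F] [NormedSpace ℂ F] [CompleteSpace F]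
    (L : E →L[ℂ] F) {f : ℂ → E} {c : ℂ} {R : ℝ} (hf : CircleIntegrable f c R) :
    (∮ z in C(c, R), L (f z)) = L (∮ z in C(c, R), f z) := by
  unfold circleIntegral
  rw [← ContinuousLinearMap.intervalIntegral_comp_comm L hf.out]
  simp

/-- A circle integral of a function with values in a closed subspace is in this subspace. -/
theorem oka_circleIntegral_mem {E : Type*} [NormedAddCommGroup E] [NormedSpace ℂ E]
    [CompleteSpace E] (A : Submodule ℂ E) (hA : IsClosed (A : Set E))
    {f : ℂ → E} {c : ℂ} {R : ℝ} (hR : 0 ≤ R) (hf : CircleIntegrable f c R)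
    (hm : ∀ z ∈ Metric.sphere c R, f z ∈ A) :
    (∮ z in C(c, R), f z) ∈ A := by
  have : IsClosed (A : Set E) := hA
  have h1 := oka_circleIntegral_comm A.mkQL hf
  have h2 : (∮ z in C(c, R), A.mkQL (f z)) = ∮ z in C(c, R), (0 : E ⧸ A) := by
    apply circleIntegral.integral_congr hR
    intro z hz
    exact (Submodule.Quotient.mk_eq_zero A).2 (hm z hz)
  rw [h2] at h1
  have h3 : A.mkQL (∮ z in C(c, R), f z) = 0 := by
    rw [← h1]; simp [circleIntegral]
  exact (Submodule.Quotient.mk_eq_zero A).1 h3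

/-- Currying a jointly continuous function. -/
theorem oka_curry {X : Type*} [TopologicalSpace X] [CompactSpace X] (T : Set ℂ)
    (g : ℂ → X → ℂ) (hg : Continuous (fun p : T × X => g p.1 p.2)) :
    ∃ F : ℂ → C(X, ℂ), ContinuousOn F T ∧ ∀ t ∈ T, ∀ z, F t z = g t z := by
  classical
  let G : C(T, C(X, ℂ)) := ContinuousMap.curry ⟨_, hg⟩
  refine ⟨fun t => if ht : t ∈ T then G ⟨t, ht⟩ else 0, ?_, ?_⟩
  · rw [continuousOn_iff_continuous_domRestrict]
    convert G.continuous using 1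
    ext t z
    simp
  · intro t ht z
    simp [ht, G]

/-- A continuous `C(X, ℂ)`-valued function, pointwise holomorphic, is analytic. -/
theorem oka_analytic {X : Type*} [TopologicalSpace X] [CompactSpace X] {T : Set ℂ}
    (hT : IsOpen T) {F : ℂ → C(X, ℂ)} (hF : ContinuousOn F T)
    (hd : ∀ z, DifferentiableOn ℂ (fun t => F t z) T) : AnalyticOnNhd ℂ F T := by
  intro t ht
  obtain ⟨R, hR, hRT⟩ := Metric.nhds_basis_closedBall.mem_iff.1 (hT.mem_nhds ht)
  lift R to NNReal using hR.le
  have hR' : 0 < R := by exact_mod_cast hR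
  have hci : CircleIntegrable F t R :=
    (hF.mono (Metric.sphere_subset_closedBall.trans hRT)).circleIntegrable R.2
  have hps := hasFPowerSeriesOn_cauchy_integral hci hR'
  refine hps.analyticAt.congr ?_
  filter_upwards [Metric.ball_mem_nhds t hR] with w hw
  ext z
  have hci2 : CircleIntegrable (fun ζ => (ζ - w)⁻¹ • F ζ) t R := by
    apply ContinuousOn.circleIntegrable R.2
    refine ContinuousOn.smul (f := fun ζ : ℂ => (ζ - w)⁻¹) ?_ ?_
    · apply ContinuousOn.inv₀ (by fun_prop)
      intro ζ hζ h0
      have : ζ = w := sub_eq_zero.1 h0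
      subst this
      rw [Metric.mem_sphere] at hζ
      rw [Metric.mem_ball, hζ] at hw
      exact lt_irrefl _ hw
    · exact hF.mono (Metric.sphere_subset_closedBall.trans hRT)
  have h1 := oka_circleIntegral_comm (ContinuousMap.evalCLM ℂ z) hci2
  have h2 := ((hd z).mono hRT).circleIntegral_sub_inv_smul hw
  simp only [ContinuousMap.evalCLM_apply, ContinuousMap.smul_apply] at h1
  rw [ContinuousMap.smul_apply, ← h1, h2, smul_smul, inv_mul_cancel₀, one_smul]
  exact Complex.two_pi_I_ne_zero

/-! ### The closure of the polynomials -/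

/-- Coordinate functions. -/
def okaCoord {n : ℕ} (X : Set (Fin n → ℂ)) (i : Fin n) : C(X, ℂ) :=
  ⟨fun z => z.1 i, (continuous_apply i).comp continuous_subtype_val⟩

/-- The algebra of uniform limits of polynomials on `X`. -/
def okaAlg {n : ℕ} (X : Set (Fin n → ℂ)) [CompactSpace X] : Subalgebra ℂ C(X, ℂ) :=
  (MvPolynomial.aeval (R := ℂ) (okaCoord X)).range.topologicalClosure

theorem okaAlg_closed {n : ℕ} (X : Set (Fin n → ℂ)) [CompactSpace X] :
    IsClosed (okaAlg X : Set C(X, ℂ)) :=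
  Subalgebra.isClosed_topologicalClosure _

theorem oka_aeval {n : ℕ} (X : Set (Fin n → ℂ)) (Q : MvPolynomial (Fin n) ℂ)
    (z : X) : MvPolynomial.aeval (R := ℂ) (okaCoord X) Q z = MvPolynomial.eval z.1 Q := by
  induction Q using MvPolynomial.induction_on with
  | C a => simp [algebraMap_apply]
  | add p q hp hq => simp [hp, hq]
  | mul_X p i hp => simp [hp, okaCoord]

theorem okaAlg_poly {n : ℕ} (X : Set (Fin n → ℂ)) [CompactSpace X]
    (Q : MvPolynomial (Fin n) ℂ) : MvPolynomial.aeval (R := ℂ) (okaCoord X) Q ∈ okaAlg X :=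
  Subalgebra.le_topologicalClosure _ ⟨Q, rfl⟩

theorem mem_okaAlg {n : ℕ} (X : Set (Fin n → ℂ)) [CompactSpace X] (f : C(X, ℂ)) :
    f ∈ okaAlg X ↔ ∀ ε > 0, ∃ Q : MvPolynomial (Fin n) ℂ,
      ∀ z : X, ‖f z - MvPolynomial.eval z.1 Q‖ < ε := by
  have : f ∈ okaAlg X ↔
      f ∈ closure ((MvPolynomial.aeval (R := ℂ) (okaCoord X)).range : Set C(X, ℂ)) := by
    rw [← Subalgebra.topologicalClosure_coe]; rfl
  rw [this, Metric.mem_closure_iff]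
  refine forall₂_congr fun ε hε => ?_
  constructor
  · rintro ⟨_, ⟨Q, rfl⟩, hQ⟩
    refine ⟨Q, fun z => ?_⟩
    have := (ContinuousMap.dist_lt_iff hε).1 hQ z
    rw [dist_eq_norm] at this
    simpa [oka_aeval] using this
  · rintro ⟨Q, hQ⟩
    refine ⟨_, ⟨Q, rfl⟩, (ContinuousMap.dist_lt_iff hε).2 fun z => ?_⟩
    rw [dist_eq_norm]
    simpa [oka_aeval] using hQ z

/-! ### Separation -/

theorem oka_unit_mul {X : Type*} [TopologicalSpace X] [CompactSpace X] (A : Subalgebra ℂ C(X, ℂ))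
    (v : Aˣ) (x : X) : ((v : A) : C(X, ℂ)) x * (((v⁻¹ : Aˣ) : A) : C(X, ℂ)) x = 1 := by
  have h : (((v : A) * ((v⁻¹ : Aˣ) : A) : A) : C(X, ℂ)) = 1 := by
    rw [v.mul_inv]; rfl
  have := congrArg (fun a : C(X, ℂ) => a x) h
  exact this

set_option maxHeartbeats 1000000 in
/-- If `u` is in a closed subalgebra and `|Re u| ≥ δ` then purely imaginary numbers are not in
the spectrum relative to the subalgebra. -/
theorem oka_unit {X : Type*} [TopologicalSpace X] [CompactSpace X] (A : Subalgebra ℂ C(X, ℂ))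
    (hA : IsClosed (A : Set C(X, ℂ))) (u : A) {δ : ℝ} (hδ : 0 < δ)
    (hu : ∀ x, δ ≤ |(u.1 x).re|) (z : ℂ) (hz : z.re = 0) : z ∉ spectrum ℂ u := by
  have : CompleteSpace A := hA.completeSpace_coe
  have key : ∀ k : ℕ, ∀ t : ℝ, ‖u‖ * ‖(1 : A)‖ + 1 - k * (δ / 2) ≤ t →
      IsUnit (algebraMap ℂ A (t * Complex.I) - u) := by
    intro k
    induction k with
    | zero =>
      intro t ht
      apply spectrum.mem_resolventSet_of_norm_lt_mul
      rw [norm_mul, Complex.norm_I, mul_one, Complex.norm_real]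
      rw [Nat.cast_zero, zero_mul, sub_zero] at ht
      exact lt_of_lt_of_le (lt_of_lt_of_le (lt_add_one _) ht) (le_abs_self t)
    | succ k ih =>
      intro t ht
      obtain ⟨v, hv⟩ := ih (t + δ / 2) (by push_cast at ht; linarith)
      have hinv : ‖((v⁻¹ : Aˣ) : A)‖ ≤ 1 / δ := by
        change ‖(((v⁻¹ : Aˣ) : A) : C(X, ℂ))‖ ≤ 1 / δ
        rw [ContinuousMap.norm_le _ (by positivity)]
        intro x
        have h1 : ((v : A) : C(X, ℂ)) x * (((v⁻¹ : Aˣ) : A) : C(X, ℂ)) x = 1 := by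
          exact oka_unit_mul A v x
        have h2 : δ ≤ ‖((v : A) : C(X, ℂ)) x‖ := by
          rw [hv]
          refine (hu x).trans ?_
          refine le_trans (le_of_eq ?_) (Complex.abs_re_le_norm _)
          simp
        have h3 := congrArg norm h1
        rw [norm_mul, norm_one] at h3
        rw [le_div_iff₀ hδ, ← h3, mul_comm]
        gcongr
      rcases subsingleton_or_nontrivial A with hs | hn
      · exact isUnit_of_subsingleton _
      have hpos : 0 < ‖((v⁻¹ : Aˣ) : A)‖ := norm_pos_iff.2 v⁻¹.ne_zero
      have hnear : ‖(algebraMap ℂ A (t * Complex.I) - u) - v‖ < ‖((v⁻¹ : Aˣ) : A)‖⁻¹ := by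
        have e : (algebraMap ℂ A (t * Complex.I) - u) - v =
            algebraMap ℂ A (-((δ / 2 : ℝ) : ℂ) * Complex.I) := by
          rw [hv, sub_sub_sub_cancel_right, ← map_sub]
          congr 1; push_cast; ring
        have h1 : ‖algebraMap ℂ A (-((δ / 2 : ℝ) : ℂ) * Complex.I)‖ ≤ δ / 2 := by
          change ‖((algebraMap ℂ A (-((δ / 2 : ℝ) : ℂ) * Complex.I) : A) : C(X, ℂ))‖ ≤ _
          rw [ContinuousMap.norm_le _ (by positivity)]
          intro x
          simp [abs_of_pos hδ]
        rw [e]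
        refine lt_of_le_of_lt h1 ?_
        have : δ ≤ ‖((v⁻¹ : Aˣ) : A)‖⁻¹ := by
          rw [le_inv_comm₀ hδ hpos, ← one_div δ]; exact hinv
        linarith
      exact ⟨Units.ofNearby v _ hnear, rfl⟩
  rw [spectrum.notMem_iff]
  obtain ⟨k, hk⟩ := exists_nat_gt ((‖u‖ * ‖(1 : A)‖ + 1 - z.im) / (δ / 2))
  have := key k z.im (by rw [div_lt_iff₀ (by positivity)] at hk; linarith)
  convert this using 3
  apply Complex.ext <;> simp [hz]

theorem oka_norm_sq (z : ℂ) : ‖z - 1‖ ^ 2 = ‖z + 1‖ ^ 2 - 4 * z.re := by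
  rw [← Complex.normSq_eq_norm_sq, ← Complex.normSq_eq_norm_sq, Complex.normSq_apply,
    Complex.normSq_apply]
  simp; ring

theorem oka_est {a b : ℂ} {q η : ℝ} {N : ℕ} (hq : 0 ≤ q) (hb : b ≠ 0) (hab : ‖a‖ ≤ q * ‖b‖)
    (h1 : q ^ N ≤ 1 / 2) (h2 : 2 * q ^ N ≤ η) : ‖a ^ N * (b ^ N + a ^ N)⁻¹‖ ≤ η := by
  have hbp : 0 < ‖b‖ ^ N := by positivity
  have h3 : ‖a‖ ^ N ≤ q ^ N * ‖b‖ ^ N := by rw [← mul_pow]; gcongr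
  have h4 : ‖b‖ ^ N / 2 ≤ ‖b ^ N + a ^ N‖ := by
    have := norm_sub_le (b ^ N + a ^ N) (a ^ N)
    rw [add_sub_cancel_right, norm_pow, norm_pow] at this
    nlinarith
  rw [norm_mul, norm_inv, ← div_eq_mul_inv, norm_pow, div_le_iff₀ (by linarith)]
  have hη : 0 ≤ η := le_trans (by positivity) h2
  nlinarith

theorem oka_sep {X : Type*} [TopologicalSpace X] [CompactSpace X] (A : Subalgebra ℂ C(X, ℂ))
    (hA : IsClosed (A : Set C(X, ℂ))) (u : A) {δ : ℝ} (hδ : 0 < δ)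
    (hu : ∀ x, δ ≤ |(u.1 x).re|) {η : ℝ} (hη : 0 < η) :
    ∃ v : A, ∀ x, ((u.1 x).re < 0 → ‖v.1 x‖ ≤ η) ∧ (0 < (u.1 x).re → ‖1 - v.1 x‖ ≤ η) := by
  -- bound
  set M : ℝ := ‖u.1‖ + 1 + 4 * δ + 1 with hM
  have hMpos : 0 < M := by positivity
  have hM1 : 4 * δ ≤ M ^ 2 := by nlinarith [norm_nonneg u.1]
  set q : ℝ := Real.sqrt (1 - 4 * δ / M ^ 2) with hq
  have hq0 : 0 ≤ q := Real.sqrt_nonneg _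
  have hqn : 0 ≤ 1 - 4 * δ / M ^ 2 := by
    rw [sub_nonneg, div_le_one (by positivity)]; exact hM1
  have hq2 : q ^ 2 = 1 - 4 * δ / M ^ 2 := Real.sq_sqrt hqn
  have hq1 : q < 1 := by
    have : 0 < 4 * δ / M ^ 2 := by positivity
    nlinarith
  have hbd : ∀ x, ‖u.1 x + 1‖ ≤ M ∧ ‖u.1 x - 1‖ ≤ M := by
    intro x
    have h1 := u.1.norm_coe_le_norm x
    constructor
    · refine (norm_add_le _ _).trans ?_
      rw [norm_one]; linarith
    · refine (norm_sub_le _ _).trans ?_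
      rw [norm_one]; linarith
  have hquo : ∀ s : ℝ, 0 ≤ s → s ≤ M → s ^ 2 - 4 * δ ≤ q ^ 2 * s ^ 2 := by
    intro s hs hsM
    rw [hq2]
    have : 4 * δ / M ^ 2 * s ^ 2 ≤ 4 * δ := by
      rw [div_mul_eq_mul_div, div_le_iff₀ (by positivity)]
      gcongr
    nlinarith
  have hpos : ∀ x, 0 < (u.1 x).re → ‖u.1 x - 1‖ ≤ q * ‖u.1 x + 1‖ := by
    intro x hx
    refine (pow_le_pow_iff_left₀ (norm_nonneg _) (by positivity) two_ne_zero).1 ?_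
    have h1 := hu x
    rw [abs_of_pos hx] at h1
    have := hquo _ (norm_nonneg _) (hbd x).1
    rw [oka_norm_sq, mul_pow]; linarith
  have hneg : ∀ x, (u.1 x).re < 0 → ‖u.1 x + 1‖ ≤ q * ‖u.1 x - 1‖ := by
    intro x hx
    refine (pow_le_pow_iff_left₀ (norm_nonneg _) (by positivity) two_ne_zero).1 ?_
    have h1 := hu x
    rw [abs_of_neg hx] at h1
    have := hquo _ (norm_nonneg _) (hbd x).2
    have h3 := oka_norm_sq (u.1 x)
    rw [mul_pow]; linarith
  obtain ⟨N, hN⟩ := exists_pow_lt_of_lt_one (show 0 < min (1 / 2) (η / 2) by positivity) hq1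
  have hN1 : q ^ N ≤ 1 / 2 := (hN.le.trans (min_le_left _ _))
  have hN2 : 2 * q ^ N ≤ η := by have := (hN.le.trans (min_le_right _ _)); linarith
  have hN0 : N ≠ 0 := by rintro rfl; norm_num at hN1
  -- the polynomial
  let p : Polynomial ℂ := (Polynomial.X + Polynomial.C 1) ^ N + (Polynomial.X + Polynomial.C (-1)) ^ N
  have hdeg : 0 < p.degree := by
    have hc : p.coeff N = 2 := by
      have h1 : ∀ c : ℂ, ((Polynomial.X + Polynomial.C c) ^ N).coeff N = 1 := by
        intro c
        rw [Polynomial.coeff_X_add_C_pow]; simp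
      simp only [p, Polynomial.coeff_add, h1]; norm_num
    have : (N : WithBot ℕ) ≤ p.degree := Polynomial.le_degree_of_ne_zero (by rw [hc]; norm_num)
    refine lt_of_lt_of_le ?_ this
    exact_mod_cast Nat.pos_of_ne_zero hN0
  have hunit : IsUnit (Polynomial.aeval u p) := by
    rw [← spectrum.zero_notMem_iff ℂ, spectrum.map_polynomial_aeval_of_degree_pos _ _ hdeg]
    rintro ⟨z, hz, hpz⟩
    refine oka_unit A hA u hδ hu z ?_ hz
    simp only [p, Polynomial.eval_add, Polynomial.eval_pow, Polynomial.eval_X,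
      Polynomial.eval_C] at hpz
    have h1 : ‖z + 1‖ ^ N = ‖z - 1‖ ^ N := by
      rw [← norm_pow, ← norm_pow, eq_neg_of_add_eq_zero_left hpz, norm_neg, sub_eq_add_neg]
    have h2 := (pow_left_inj₀ (norm_nonneg _) (norm_nonneg _) hN0).1 h1
    have h3 := oka_norm_sq z
    rw [h2] at h3
    linarith
  obtain ⟨v, hv⟩ := hunit
  have hval : ∀ x, ((v : A) : C(X, ℂ)) x = (u.1 x + 1) ^ N + (u.1 x - 1) ^ N := by
    intro x
    rw [hv]
    simp [p, sub_eq_add_neg]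
  have hvi : ∀ x, ((v : A) : C(X, ℂ)) x * (((v⁻¹ : Aˣ) : A) : C(X, ℂ)) x = 1 := by
    intro x
    exact oka_unit_mul A v x
  have hinv : ∀ x, (((v⁻¹ : Aˣ) : A) : C(X, ℂ)) x = ((u.1 x + 1) ^ N + (u.1 x - 1) ^ N)⁻¹ := by
    intro x
    rw [← hval]
    exact eq_inv_of_mul_eq_one_right (hvi x)
  have hne : ∀ x, (u.1 x + 1) ^ N + (u.1 x - 1) ^ N ≠ 0 := by
    intro x h0
    have := hvi x
    rw [hval, h0, zero_mul] at this
    exact zero_ne_one this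
  refine ⟨(u + 1) ^ N * ((v⁻¹ : Aˣ) : A), fun x => ?_⟩
  have hw : (((u + 1) ^ N * ((v⁻¹ : Aˣ) : A) : A) : C(X, ℂ)) x =
      (u.1 x + 1) ^ N * ((u.1 x + 1) ^ N + (u.1 x - 1) ^ N)⁻¹ := by
    rw [← hinv]; simp
  constructor
  · intro hx
    rw [hw, add_comm ((u.1 x + 1) ^ N)]
    refine oka_est hq0 ?_ (hneg x hx) hN1 hN2
    intro h0
    rw [sub_eq_zero.1 h0] at hx
    norm_num at hx
  · intro hx
    have e : 1 - (u.1 x + 1) ^ N * ((u.1 x + 1) ^ N + (u.1 x - 1) ^ N)⁻¹ =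
        (u.1 x - 1) ^ N * ((u.1 x + 1) ^ N + (u.1 x - 1) ^ N)⁻¹ := by
      have := hne x
      field_simp; ring
    rw [hw, e]
    refine oka_est hq0 ?_ (hpos x hx) hN1 hN2
    intro h0
    rw [eq_neg_of_add_eq_zero_left h0] at hx
    norm_num at hx

/-! ### Local approximation -/

/-- Cauchy kernels in one coordinate are uniform limits of polynomials. -/
theorem oka_kernel {n : ℕ} (z0 : Fin n → ℂ) {r R : ℝ} (hr : 0 ≤ r) (hrR : r < R)
    [CompactSpace (Metric.closedBall z0 r)] (j : Fin n) (ζ : ℂ) (hζ : ζ ∈ Metric.sphere (z0 j) R) :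
    ∃ g ∈ okaAlg (Metric.closedBall z0 r), ∀ z : Metric.closedBall z0 r,
      g z = (ζ - z.1 j)⁻¹ := by
  have : CompleteSpace (okaAlg (Metric.closedBall z0 r)) := (okaAlg_closed _).completeSpace_coe
  let u : okaAlg (Metric.closedBall z0 r) :=
    ⟨_, okaAlg_poly (Metric.closedBall z0 r) (MvPolynomial.X j - MvPolynomial.C (z0 j))⟩
  have huv : ∀ z, u.1 z = z.1 j - z0 j := by
    intro z
    change MvPolynomial.aeval (R := ℂ) (okaCoord _) _ z = _
    rw [oka_aeval]
    simp
  have hu : ‖u‖ ≤ r := by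
    change ‖u.1‖ ≤ r
    rw [ContinuousMap.norm_le _ hr]
    intro z
    rw [huv, ← dist_eq_norm]
    exact (dist_le_pi_dist _ _ j).trans z.2
  have h1 : ‖(1 : okaAlg (Metric.closedBall z0 r))‖ ≤ 1 := by
    change ‖(1 : C(Metric.closedBall z0 r, ℂ))‖ ≤ 1
    rw [ContinuousMap.norm_le _ zero_le_one]
    intro z
    rw [ContinuousMap.one_apply, norm_one]
  have hres : ζ - z0 j ∈ resolventSet ℂ u := by
    apply spectrum.mem_resolventSet_of_norm_lt_mul
    rw [← dist_eq_norm, Metric.mem_sphere.1 hζ]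
    calc ‖u‖ * ‖(1 : okaAlg (Metric.closedBall z0 r))‖ ≤ r * 1 := by gcongr
      _ < R := by linarith
  obtain ⟨v, hv⟩ := hres
  refine ⟨_, ((v⁻¹ : (okaAlg (Metric.closedBall z0 r))ˣ) : okaAlg (Metric.closedBall z0 r)).2,
    fun z => ?_⟩
  have h2 := oka_unit_mul _ v z
  have h3 : ((v : okaAlg (Metric.closedBall z0 r)) : C(Metric.closedBall z0 r, ℂ)) z
      = ζ - z.1 j := by
    rw [hv]
    change (ζ - z0 j) - u.1 z = _
    rw [huv]; ring
  rw [h3] at h2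
  exact eq_inv_of_mul_eq_one_right h2

theorem oka_local_aux {n : ℕ} (z0 : Fin n → ℂ) {r R : ℝ} (hr : 0 ≤ r) (hrR : r < R)
    [CompactSpace (Metric.closedBall z0 r)] (h : (Fin n → ℂ) → ℂ) (V : Set (Fin n → ℂ))
    (hRV : Metric.closedBall z0 R ⊆ V)
    (hh : DifferentiableOn ℂ h V) (S : Finset (Fin n)) :
    ∀ c ∈ Metric.closedBall z0 R, ∀ f : C(Metric.closedBall z0 r, ℂ),
      (∀ z, f z = h (fun i => if i ∈ S then z.1 i else c i)) →
      f ∈ okaAlg (Metric.closedBall z0 r) := by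
  have hR : 0 ≤ R := hr.trans hrR.le
  induction S using Finset.induction_on with
  | empty =>
    intro c hc f hf
    have : f = algebraMap ℂ _ (h c) := by
      ext z
      rw [hf]; simp
    rw [this]
    exact Subalgebra.algebraMap_mem _ _
  | insert j S hj ih =>
    intro c hc f hf
    -- the point obtained by mixing coordinates
    let mix : ℂ → Metric.closedBall z0 r → Fin n → ℂ :=
      fun ζ z i => if i ∈ S then z.1 i else Function.update c j ζ i
    have hupd : ∀ ζ ∈ Metric.closedBall (z0 j) R, Function.update c j ζ ∈ Metric.closedBall z0 R := by
      intro ζ hζ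
      rw [Metric.mem_closedBall, dist_pi_le_iff hR]
      intro i
      by_cases hi : i = j
      · subst hi; simpa using hζ
      · rw [Function.update_of_ne hi]
        exact (dist_le_pi_dist _ _ i).trans hc
    have hmix : ∀ ζ ∈ Metric.closedBall (z0 j) R, ∀ z, mix ζ z ∈ V := by
      intro ζ hζ z
      apply hRV
      rw [Metric.mem_closedBall, dist_pi_le_iff hR]
      intro i
      by_cases hi : i ∈ S
      · simp only [mix, hi, if_true]
        exact ((dist_le_pi_dist _ _ i).trans z.2).trans hrR.le
      · simp only [mix, hi, if_false]
        exact (dist_le_pi_dist _ _ i).trans (hupd ζ hζ)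
    have hmixc : Continuous (fun p : ℂ × Metric.closedBall z0 r => mix p.1 p.2) := by
      refine continuous_pi fun i => ?_
      by_cases hi : i ∈ S
      · simp only [mix, hi, if_true]
        exact (continuous_apply i).comp (continuous_subtype_val.comp continuous_snd)
      · simp only [mix, hi, if_false]
        exact (continuous_apply i).comp
          ((continuous_const (y := c)).update j continuous_fst)
    have hmixd : ∀ z, Differentiable ℂ (fun ζ => mix ζ z) := by
      intro z
      refine differentiable_pi.2 fun i => ?_
      by_cases hi : i ∈ S
      · simp only [mix, hi, if_true]
        exact differentiable_const _
      · simp only [mix, hi, if_false]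
        by_cases hij : i = j
        · subst hij
          simp only [Function.update_self]
          exact differentiable_id
        · simp only [Function.update_of_ne hij]
          exact differentiable_const _
    have hsub : Metric.sphere (z0 j) R ⊆ Metric.closedBall (z0 j) R :=
      Metric.sphere_subset_closedBall
    have hne : ∀ ζ ∈ Metric.sphere (z0 j) R, ∀ z : Metric.closedBall z0 r, ζ - z.1 j ≠ 0 := by
      intro ζ hζ z h0
      have h1 : ζ = z.1 j := sub_eq_zero.1 h0
      have h2 := (dist_le_pi_dist _ _ j).trans z.2
      rw [← h1, Metric.mem_sphere.1 hζ] at h2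
      linarith
    have hhc : Continuous (fun p : Metric.sphere (z0 j) R × Metric.closedBall z0 r =>
        h (mix p.1 p.2)) := by
      refine hh.continuousOn.comp_continuous
        (f := fun p : Metric.sphere (z0 j) R × Metric.closedBall z0 r => mix p.1 p.2) ?_ ?_
      · exact hmixc.comp ((continuous_subtype_val.comp continuous_fst).prodMk continuous_snd)
      · intro p
        exact hmix _ (hsub p.1.2) _
    obtain ⟨F, hFc, hF⟩ := oka_curry (Metric.sphere (z0 j) R)
      (fun ζ (z : Metric.closedBall z0 r) => (ζ - z.1 j)⁻¹ * h (mix ζ z)) (by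
        refine Continuous.mul (Continuous.inv₀ ?_ ?_) hhc
        · exact (continuous_subtype_val.comp continuous_fst).sub
            ((continuous_apply j).comp (continuous_subtype_val.comp continuous_snd))
        · intro p
          exact hne _ p.1.2 _)
    have hFm : ∀ ζ ∈ Metric.sphere (z0 j) R, F ζ ∈ okaAlg (Metric.closedBall z0 r) := by
      intro ζ hζ
      obtain ⟨g, hg, hgv⟩ := oka_kernel z0 hr hrR j ζ hζ
      let G : C(Metric.closedBall z0 r, ℂ) := ⟨fun z => h (mix ζ z), by
        exact hhc.comp (continuous_const.prodMk continuous_id :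
          Continuous (fun z : Metric.closedBall z0 r => ((⟨ζ, hζ⟩ : Metric.sphere (z0 j) R), z)))⟩
      have hG : G ∈ okaAlg (Metric.closedBall z0 r) :=
        ih (Function.update c j ζ) (hupd ζ (hsub hζ)) G (fun z => rfl)
      have : F ζ = g * G := by
        ext z
        rw [hF ζ hζ, ContinuousMap.mul_apply, hgv]
        rfl
      rw [this]
      exact mul_mem hg hG
    have hFi : CircleIntegrable F (z0 j) R := hFc.circleIntegrable hR
    have hintegral : (∮ ζ in C(z0 j, R), F ζ) ∈ okaAlg (Metric.closedBall z0 r) :=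
      oka_circleIntegral_mem (Subalgebra.toSubmodule (okaAlg (Metric.closedBall z0 r)))
        (okaAlg_closed _) hR hFi hFm
    have hfe : f = (2 * Real.pi * Complex.I : ℂ)⁻¹ • ∮ ζ in C(z0 j, R), F ζ := by
      ext z
      have h1 := oka_circleIntegral_comm (ContinuousMap.evalCLM ℂ z) hFi
      simp only [ContinuousMap.evalCLM_apply] at h1
      have h2 : (∮ ζ in C(z0 j, R), F ζ z) =
          ∮ ζ in C(z0 j, R), (ζ - z.1 j)⁻¹ • h (mix ζ z) := by
        apply circleIntegral.integral_congr hR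
        intro ζ hζ
        exact hF ζ hζ z
      have hd : DifferentiableOn ℂ (fun ζ => h (mix ζ z)) (Metric.closedBall (z0 j) R) :=
        hh.comp (hmixd z).differentiableOn (fun ζ hζ => hmix ζ hζ z)
      have hzj : z.1 j ∈ Metric.ball (z0 j) R :=
        lt_of_le_of_lt ((dist_le_pi_dist _ _ j).trans z.2) hrR
      have h3 := hd.circleIntegral_sub_inv_smul hzj
      rw [ContinuousMap.smul_apply, ← h1, h2, h3, smul_smul,
        inv_mul_cancel₀ Complex.two_pi_I_ne_zero, one_smul, hf]
      congr 1
      funext i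
      by_cases hi : i ∈ S
      · simp [mix, hi]
      · by_cases hij : i = j
        · subst hij; simp [mix, hi]
        · simp [mix, hi, hij]
    rw [hfe]
    exact Subalgebra.smul_mem _ hintegral _

/-- Local polynomial approximation of holomorphic functions on polydiscs. -/
theorem oka_local {n : ℕ} (z0 : Fin n → ℂ) (h : (Fin n → ℂ) → ℂ) (V : Set (Fin n → ℂ))
    (hV : IsOpen V) (hz : z0 ∈ V) (hh : DifferentiableOn ℂ h V) :
    ∃ r > 0, Metric.closedBall z0 r ⊆ V ∧ ∀ ε > 0, ∃ Q : MvPolynomial (Fin n) ℂ,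
      ∀ z ∈ Metric.closedBall z0 r, ‖h z - MvPolynomial.eval z Q‖ < ε := by
  obtain ⟨R, hR, hRV⟩ := Metric.nhds_basis_closedBall.mem_iff.1 (hV.mem_nhds hz)
  have hsub : Metric.closedBall z0 (R / 2) ⊆ V :=
    (Metric.closedBall_subset_closedBall (by linarith)).trans hRV
  refine ⟨R / 2, by linarith, hsub, ?_⟩
  have : CompactSpace (Metric.closedBall z0 (R / 2)) :=
    isCompact_iff_compactSpace.1 (isCompact_closedBall z0 (R / 2))
  let f : C(Metric.closedBall z0 (R / 2), ℂ) :=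
    ⟨fun z => h z.1, hh.continuousOn.comp_continuous continuous_subtype_val (fun z => hsub z.2)⟩
  have hf := oka_local_aux z0 (r := R / 2) (R := R) (by linarith) (by linarith) h V hRV hh
    Finset.univ z0 (Metric.mem_closedBall_self hR.le) f (by intro z; simp [f])
  intro ε hε
  obtain ⟨Q, hQ⟩ := (mem_okaAlg _ _).1 hf ε hε
  exact ⟨Q, fun z hz => hQ ⟨z, hz⟩⟩

theorem oka_eval_bind {n : ℕ} (g : Fin n → MvPolynomial (Fin n) ℂ) (Q : MvPolynomial (Fin n) ℂ)
    (z : Fin n → ℂ) : MvPolynomial.eval z (MvPolynomial.bind₁ g Q) =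
      MvPolynomial.eval (fun i => MvPolynomial.eval z (g i)) Q := by
  induction Q using MvPolynomial.induction_on with
  | C a => simp
  | add p q hp hq => simp [hp, hq]
  | mul_X p i hp => simp [hp]

/-- Polynomial approximation on compact sets star-shaped about `z0`. -/
theorem oka_star {n : ℕ} (K : Set (Fin n → ℂ)) (hK : IsCompact K) (z0 : Fin n → ℂ) (hz0 : z0 ∈ K)
    (hst : StarConvex ℝ z0 K) (V : Set (Fin n → ℂ)) (hV : IsOpen V) (hKV : K ⊆ V)
    (h : (Fin n → ℂ) → ℂ) (hh : DifferentiableOn ℂ h V) {ε : ℝ} (hε : 0 < ε) :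
    ∃ Q : MvPolynomial (Fin n) ℂ, ∀ z ∈ K, ‖h z - MvPolynomial.eval z Q‖ < ε := by
  have : CompactSpace K := isCompact_iff_compactSpace.1 hK
  obtain ⟨r, hr, hrV, hloc⟩ := oka_local z0 h V hV (hKV hz0) hh
  let γ : ℂ → (Fin n → ℂ) → (Fin n → ℂ) := fun t z => z0 + t • (z - z0)
  have hγc : Continuous (fun p : ℂ × (Fin n → ℂ) => γ p.1 p.2) := by
    simp only [γ]; fun_prop
  let T : Set ℂ := {t | ∀ z ∈ K, γ t z ∈ V}
  have hT : IsOpen T := by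
    rw [isOpen_iff_eventually]
    intro t ht
    refine hK.eventually_forall_of_forall_eventually fun z hz => ?_
    exact hγc.continuousAt.eventually (hV.mem_nhds (ht z hz))
  have hIT : ∀ t ∈ Set.Icc (0 : ℝ) 1, (t : ℂ) ∈ T := by
    intro t ht z hz
    apply hKV
    have := (starConvex_iff_segment_subset.1 hst hz)
    apply this
    rw [segment_eq_image']
    exact ⟨t, ht, by simp [γ]⟩
  obtain ⟨F, hFc, hF⟩ := oka_curry T (fun t (z : K) => h (γ t z)) (by
    refine hh.continuousOn.comp_continuous (f := fun p : T × K => γ p.1 p.2) ?_ ?_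
    · exact hγc.comp ((continuous_subtype_val.comp continuous_fst).prodMk
        (continuous_subtype_val.comp continuous_snd))
    · intro p
      exact p.1.2 _ p.2.2)
  have hFa : AnalyticOnNhd ℂ F T := by
    refine oka_analytic hT hFc fun z => ?_
    have hd : DifferentiableOn ℂ (fun t => h (γ t z)) T := by
      refine hh.comp (t := V) (f := fun t => γ t z) ?_ (fun t ht => ht z z.2)
      simp only [γ]
      fun_prop
    exact hd.congr fun t ht => hF t ht z
  let A : Submodule ℂ C(K, ℂ) := Subalgebra.toSubmodule (okaAlg K)
  have hA : IsClosed (A : Set C(K, ℂ)) := okaAlg_closed K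
  have hπ : AnalyticOnNhd ℂ (fun t => A.mkQL (F t)) ((fun t : ℝ => (t : ℂ)) '' Set.Icc 0 1) := by
    rintro _ ⟨t, ht, rfl⟩
    exact (A.mkQL.analyticAt _).comp (hFa _ (hIT t ht))
  have h0 : ∀ᶠ t in 𝓝 (0 : ℂ), A.mkQL (F t) = 0 := by
    have h1 : ∀ᶠ t in 𝓝 (0 : ℂ), ∀ z ∈ K, γ t z ∈ Metric.closedBall z0 r := by
      refine hK.eventually_forall_of_forall_eventually fun z hz => ?_
      have : Metric.closedBall z0 r ∈ 𝓝 (γ 0 z) := by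
        have e : γ 0 z = z0 := by simp [γ]
        rw [e]
        exact Metric.closedBall_mem_nhds z0 hr
      exact (hγc.continuousAt (x := ((0 : ℂ), z))).eventually this
    have h2 : ∀ᶠ t in 𝓝 (0 : ℂ), t ∈ T := by
      have := hIT 0 (by simp)
      rw [Complex.ofReal_zero] at this
      exact hT.mem_nhds this
    filter_upwards [h1, h2] with t ht htT
    refine (Submodule.Quotient.mk_eq_zero A).2 ?_
    change F t ∈ okaAlg K
    rw [mem_okaAlg]
    intro e he
    obtain ⟨Q, hQ⟩ := hloc e he
    refine ⟨MvPolynomial.bind₁ (fun i => MvPolynomial.C (z0 i) +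
      MvPolynomial.C t * (MvPolynomial.X i - MvPolynomial.C (z0 i))) Q, fun z => ?_⟩
    rw [hF t htT, oka_eval_bind]
    have := hQ _ (ht z z.2)
    convert this using 5
    funext i
    simp [γ]
  have hzero := hπ.eqOn_zero_of_preconnected_of_eventuallyEq_zero
    (isPreconnected_Icc.image _ Complex.continuous_ofReal.continuousOn)
    (z₀ := 0) ⟨0, by simp, by simp⟩ h0
  have h1 : A.mkQL (F 1) = 0 := hzero ⟨1, by simp, by simp⟩
  have h2 : F 1 ∈ okaAlg K := (Submodule.Quotient.mk_eq_zero A).1 h1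
  obtain ⟨Q, hQ⟩ := (mem_okaAlg _ _).1 h2 ε hε
  refine ⟨Q, fun z hz => ?_⟩
  have h3 := hQ ⟨z, hz⟩
  have h4 : (1 : ℂ) ∈ T := by simpa using hIT 1 (by simp)
  rw [hF 1 h4] at h3
  simpa [γ] using h3

theorem oka_convex {n : ℕ} (K : Set (Fin n → ℂ)) (hK : IsCompact K)
    (hcv : Convex ℝ K) (V : Set (Fin n → ℂ)) (hV : IsOpen V) (hKV : K ⊆ V)
    (h : (Fin n → ℂ) → ℂ) (hh : DifferentiableOn ℂ h V) {ε : ℝ} (hε : 0 < ε) :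
    ∃ Q : MvPolynomial (Fin n) ℂ, ∀ z ∈ K, ‖h z - MvPolynomial.eval z Q‖ < ε := by
  rcases K.eq_empty_or_nonempty with rfl | ⟨z0, hz0⟩
  · exact ⟨0, by simp⟩
  · exact oka_star K hK z0 hz0 (hcv.starConvex hz0) V hV hKV h hh hε

/-- Polynomials close to `0` on `K₁` and to `1` on `K₂`. -/
theorem oka_bump {n : ℕ} (K₁ K₂ : Set (Fin n → ℂ))
    (hK₁cpt : IsCompact K₁) (hK₁cv : Convex ℝ K₁)
    (hK₂cpt : IsCompact K₂) (hK₂cv : Convex ℝ K₂)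
    (hdisj : Disjoint K₁ K₂) {η : ℝ} (hη : 0 < η) :
    ∃ P : MvPolynomial (Fin n) ℂ, (∀ z ∈ K₁, ‖MvPolynomial.eval z P‖ < η) ∧
      ∀ z ∈ K₂, ‖1 - MvPolynomial.eval z P‖ < η := by
  have : CompactSpace (K₁ ∪ K₂ : Set (Fin n → ℂ)) :=
    isCompact_iff_compactSpace.1 (hK₁cpt.union hK₂cpt)
  obtain ⟨L, a, b, hLa, hab, hLb⟩ := RCLike.geometric_hahn_banach_compact_closed (𝕜 := ℂ)
    hK₁cv hK₁cpt hK₂cv hK₂cpt.isClosed hdisj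
  let p : MvPolynomial (Fin n) ℂ :=
    (∑ i, MvPolynomial.C (L (Pi.single i 1)) * MvPolynomial.X i) -
      MvPolynomial.C (((a + b) / 2 : ℝ) : ℂ)
  have hp : ∀ z, MvPolynomial.eval z p = L z - (((a + b) / 2 : ℝ) : ℂ) := by
    intro z
    have hz : L z = ∑ i, L (Pi.single i 1) * z i := by
      conv_lhs => rw [← Finset.univ_sum_single z, map_sum]
      refine Finset.sum_congr rfl fun i _ => ?_
      have : Pi.single i (z i) = z i • (Pi.single i 1 : Fin n → ℂ) := by
        rw [← Pi.single_smul, smul_eq_mul, mul_one]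
      rw [this, map_smul, smul_eq_mul, mul_comm]
    rw [hz]
    simp [p]
  let u : okaAlg (K₁ ∪ K₂) := ⟨_, okaAlg_poly _ p⟩
  have hu : ∀ z, u.1 z = L z.1 - (((a + b) / 2 : ℝ) : ℂ) := by
    intro z
    rw [← hp, ← oka_aeval]
  have hre : ∀ z, (u.1 z).re = (L z.1).re - (a + b) / 2 := by
    intro z
    rw [hu, Complex.sub_re, Complex.ofReal_re]
  have hneg : ∀ z (hz : z ∈ K₁), (u.1 ⟨z, Or.inl hz⟩).re < -((b - a) / 2) := by
    intro z hz
    rw [hre]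
    have := hLa z hz
    simp only [RCLike.re_eq_complex_re] at this
    linarith
  have hpos : ∀ z (hz : z ∈ K₂), (b - a) / 2 < (u.1 ⟨z, Or.inr hz⟩).re := by
    intro z hz
    rw [hre]
    have := hLb z hz
    simp only [RCLike.re_eq_complex_re] at this
    linarith
  obtain ⟨v, hv⟩ := oka_sep (okaAlg (K₁ ∪ K₂)) (okaAlg_closed _) u (δ := (b - a) / 2)
    (by linarith) (by
      rintro ⟨z, hz | hz⟩
      · have := hneg z hz
        have h2 := neg_le_abs (u.1 ⟨z, Or.inl hz⟩).re
        linarith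
      · have := hpos z hz
        exact this.le.trans (le_abs_self _)) (η := η / 2) (by linarith)
  obtain ⟨P, hP⟩ := (mem_okaAlg _ _).1 v.2 (η / 2) (by linarith)
  refine ⟨P, fun z hz => ?_, fun z hz => ?_⟩
  · have h1 := (hv ⟨z, Or.inl hz⟩).1 (by have := hneg z hz; linarith)
    have h2 := hP ⟨z, Or.inl hz⟩
    rw [norm_sub_rev] at h2
    have h3 := norm_add_le (MvPolynomial.eval z P - v.1 ⟨z, Or.inl hz⟩) (v.1 ⟨z, Or.inl hz⟩)
    rw [sub_add_cancel] at h3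
    linarith
  · have h1 := (hv ⟨z, Or.inr hz⟩).2 (by have := hpos z hz; linarith)
    have h2 := hP ⟨z, Or.inr hz⟩
    have h3 := norm_add_le (1 - v.1 ⟨z, Or.inr hz⟩) (v.1 ⟨z, Or.inr hz⟩ - MvPolynomial.eval z P)
    rw [sub_add_sub_cancel] at h3
    linarith

theorem oka_poly_bound {n : ℕ} (K : Set (Fin n → ℂ)) (hK : IsCompact K)
    (Q : MvPolynomial (Fin n) ℂ) : ∃ M, ∀ z ∈ K, ‖MvPolynomial.eval z Q‖ ≤ M :=
  hK.exists_bound_of_continuousOn (MvPolynomial.continuous_eval Q).continuousOn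

/-- Oka–Weil approximation on the union of two disjoint compact convex sets. -/
theorem okaWeil_two_convex (n : ℕ) (K₁ K₂ : Set (Fin n → ℂ))
    (hK₁cpt : IsCompact K₁) (hK₁cv : Convex ℝ K₁)
    (hK₂cpt : IsCompact K₂) (hK₂cv : Convex ℝ K₂)
    (hdisj : Disjoint K₁ K₂)
    (V : Set (Fin n → ℂ)) (hV : IsOpen V) (hKV : K₁ ∪ K₂ ⊆ V)
    (h : (Fin n → ℂ) → ℂ) (hh : DifferentiableOn ℂ h V)
    (ε : ℝ) (hε : 0 < ε) :
    ∃ Q : MvPolynomial (Fin n) ℂ, ∀ z ∈ K₁ ∪ K₂, ‖h z - mvEval Q z‖ < ε := by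
  obtain ⟨Q₁, hQ₁⟩ := oka_convex K₁ hK₁cpt hK₁cv V hV (subset_union_left.trans hKV) h hh
    (half_pos hε)
  obtain ⟨Q₂, hQ₂⟩ := oka_convex K₂ hK₂cpt hK₂cv V hV (subset_union_right.trans hKV) h hh
    (half_pos hε)
  obtain ⟨M, hM⟩ := oka_poly_bound (K₁ ∪ K₂) (hK₁cpt.union hK₂cpt) (Q₁ - Q₂)
  have hM' : 0 < |M| + 1 := by positivity
  obtain ⟨P, hP₁, hP₂⟩ := oka_bump K₁ K₂ hK₁cpt hK₁cv hK₂cpt hK₂cv hdisj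
    (show 0 < ε / 2 / (|M| + 1) by positivity)
  have key : ∀ w d : ℂ, ‖w‖ < ε / 2 / (|M| + 1) → ‖d‖ ≤ M → ‖w * d‖ ≤ ε / 2 := by
    intro w d hw hd
    rw [norm_mul]
    have hd' : ‖d‖ ≤ |M| + 1 := by linarith [le_abs_self M]
    calc ‖w‖ * ‖d‖ ≤ ε / 2 / (|M| + 1) * (|M| + 1) := by gcongr
      _ = ε / 2 := div_mul_cancel₀ _ hM'.ne'
  refine ⟨(1 - P) * Q₁ + P * Q₂, fun z hz => ?_⟩
  have hd : ‖MvPolynomial.eval z Q₁ - MvPolynomial.eval z Q₂‖ ≤ M := by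
    simpa using hM z hz
  simp only [mvEval, map_add, map_mul, map_sub, map_one]
  rcases hz with hz | hz
  · have h1 := hQ₁ z hz
    have h2 := key _ _ (hP₁ z hz) hd
    have e : h z - ((1 - MvPolynomial.eval z P) * MvPolynomial.eval z Q₁ +
        MvPolynomial.eval z P * MvPolynomial.eval z Q₂) = (h z - MvPolynomial.eval z Q₁) +
        MvPolynomial.eval z P * (MvPolynomial.eval z Q₁ - MvPolynomial.eval z Q₂) := by ring
    rw [e]
    refine (norm_add_le _ _).trans_lt ?_
    linarith
  · have h1 := hQ₂ z hz
    have h2 := key _ _ (hP₂ z hz) hd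
    have e : h z - ((1 - MvPolynomial.eval z P) * MvPolynomial.eval z Q₁ +
        MvPolynomial.eval z P * MvPolynomial.eval z Q₂) = (h z - MvPolynomial.eval z Q₂) -
        (1 - MvPolynomial.eval z P) * (MvPolynomial.eval z Q₁ - MvPolynomial.eval z Q₂) := by ring
    rw [e]
    refine (norm_sub_le _ _).trans_lt ?_
    linarith

end
end

section
/- Let Ω₁ and Ω₂ be two disjoint open convex subsets of ℂⁿ. Then Ω₁ ∪ Ω₂ is a Runge domain: for every holomorphic function f on Ω₁ ∪ Ω₂, every compact set L ⊆ Ω₁ ∪ Ω₂, and every ε > 0, there exists a holomorphic polynomial Q on ℂⁿ such that sup_{z ∈ L} ‖f(z) − Q(z)‖ < ε. -/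
open Set Filter Topology

noncomputable section

theorem aux_lin {n : ℕ} (T : (Fin n → ℂ) →L[ℂ] ℂ) (z : Fin n → ℂ) :
    T z = ∑ i, z i * T (Pi.single i 1) := by
  have h := congrArg T (pi_eq_sum_univ' z)
  rw [h, map_sum]
  refine Finset.sum_congr rfl fun i _ => ?_
  rw [map_smul, smul_eq_mul]

/-- Directional derivatives of a holomorphic function are holomorphic. -/
theorem aux_dirDeriv {n : ℕ} {U : Set (Fin n → ℂ)} (hU : IsOpen U) {f : (Fin n → ℂ) → ℂ}
    (hf : DifferentiableOn ℂ f U) (v : Fin n → ℂ) :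
    DifferentiableOn ℂ (fun z => fderiv ℂ f z v) U := by
  intro z₀ hz₀
  apply DifferentiableAt.differentiableWithinAt
  -- choose a ball with bound
  have hcont : ContinuousAt f z₀ := (hf.differentiableAt (hU.mem_nhds hz₀)).continuousAt
  have hev : ∀ᶠ z in 𝓝 z₀, z ∈ U ∧ ‖f z‖ < ‖f z₀‖ + 1 :=
    (hU.eventually_mem hz₀).and
      (hcont.norm.eventually (gt_mem_nhds (lt_add_one _)))
  obtain ⟨R', hR', hball⟩ := Metric.eventually_nhds_iff_ball.1 hev
  set M := ‖f z₀‖ + 1 with hM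
  obtain ⟨R, hR, rfl⟩ : ∃ R : ℝ, 0 < R ∧ R' = 3 * R := ⟨R' / 3, by positivity, by ring⟩
  have hdiffat : ∀ z ∈ Metric.ball z₀ (3 * R), DifferentiableAt ℂ f z := fun z hz =>
    hf.differentiableAt (hU.mem_nhds (hball z hz).1)
  obtain ⟨r, hr, hrv⟩ : ∃ r : ℝ, 0 < r ∧ r * ‖v‖ < R := by
    refine ⟨R / (‖v‖ + 1), by positivity, ?_⟩
    rw [div_mul_eq_mul_div, div_lt_iff₀ (by positivity)]
    nlinarith [norm_nonneg v]
  have hmem : ∀ z ∈ Metric.ball z₀ R, ∀ t : ℂ, ‖t‖ ≤ r → z + t • v ∈ Metric.ball z₀ (2 * R) := by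
    intro z hz t ht
    rw [mem_ball_iff_norm] at hz ⊢
    calc ‖z + t • v - z₀‖ = ‖(z - z₀) + t • v‖ := by congr 1; abel
      _ ≤ ‖z - z₀‖ + ‖t‖ * ‖v‖ := by
        rw [← norm_smul]; exact norm_add_le _ _
      _ ≤ ‖z - z₀‖ + r * ‖v‖ := by gcongr
      _ < 2 * R := by linarith
  have h23 : Metric.ball z₀ (2 * R) ⊆ Metric.ball z₀ (3 * R) :=
    Metric.ball_subset_ball (by linarith)
  have hbd : ∀ w ∈ Metric.ball z₀ (2 * R), ‖fderiv ℂ f w‖ ≤ 2 * M / R := by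
    intro w hw
    have hsub : Metric.ball w R ⊆ Metric.ball z₀ (3 * R) := by
      apply Metric.ball_subset_ball'
      rw [Metric.mem_ball] at hw
      linarith
    apply Complex.norm_fderiv_le_div_of_mapsTo_ball
      (fun x hx => (hdiffat x (hsub hx)).differentiableWithinAt) _ hR
    intro x hx
    rw [mem_closedBall_iff_norm]
    have h1 := (hball x (hsub hx)).2
    have h2 := (hball w (h23 hw)).2
    linarith [norm_sub_le (f x) (f w)]
  set c : ℝ → ℂ := fun θ => deriv (circleMap 0 r) θ * (1 / (circleMap 0 r θ) ^ 2) with hc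
  have hcm : ∀ θ, ‖circleMap 0 r θ‖ = r := by intro θ; simp [abs_of_pos hr]
  have hc0 : ∀ θ, circleMap 0 r θ ≠ 0 := fun θ h => by
    have := hcm θ; rw [h] at this; simp at this; linarith
  have hccont : Continuous c := by
    have : Continuous (circleMap 0 r) := continuous_circleMap 0 r
    simp only [hc, deriv_circleMap]
    refine (this.mul continuous_const).mul (continuous_const.div (this.pow 2) ?_)
    intro θ; exact pow_ne_zero 2 (hc0 θ)
  have hcn : ∀ θ, ‖c θ‖ = r * (1 / r ^ 2) := by
    intro θ
    simp only [hc, deriv_circleMap, norm_mul, norm_div, norm_pow, hcm]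
    simp
  set F : (Fin n → ℂ) → ℝ → ℂ := fun z θ => c θ * f (z + circleMap 0 r θ • v) with hF
  set F' : (Fin n → ℂ) → ℝ → ((Fin n → ℂ) →L[ℂ] ℂ) :=
    fun z θ => c θ • fderiv ℂ f (z + circleMap 0 r θ • v) with hF'
  have hkey : ∀ z ∈ Metric.ball z₀ R,
      fderiv ℂ f z v = (2 * Real.pi * Complex.I)⁻¹ * ∫ θ in (0:ℝ)..2 * Real.pi, F z θ := by
    intro z hz
    have hd : DifferentiableOn ℂ (fun t : ℂ => f (z + t • v)) (Metric.closedBall 0 r) := by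
      intro t ht
      apply DifferentiableAt.differentiableWithinAt
      have h1 : DifferentiableAt ℂ f (z + t • v) :=
        hdiffat _ (h23 (hmem z hz t (by simpa using ht)))
      exact h1.comp (f := fun t : ℂ => z + t • v) t (by fun_prop)
    have h2 := hd.deriv_eq_smul_circleIntegral hr
    have h3 : deriv (fun t : ℂ => f (z + t • v)) 0 = fderiv ℂ f z v := by
      have h4 : HasFDerivAt f (fderiv ℂ f z) (z + (0:ℂ) • v) := by
        simpa using (hdiffat z (Metric.ball_subset_ball (by linarith) hz)).hasFDerivAt
      have h5 : HasDerivAt (fun t : ℂ => z + t • v) v 0 := by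
        simpa using ((hasDerivAt_id (0:ℂ)).smul_const v).const_add z
      exact (h4.comp_hasDerivAt (f := fun t : ℂ => z + t • v) 0 h5).deriv
    have hpi : (2 * Real.pi * Complex.I : ℂ) ≠ 0 := by
      simp [Real.pi_ne_zero]
    rw [h3] at h2
    rw [eq_inv_mul_iff_mul_eq₀ hpi, ← smul_eq_mul, ← h2, circleIntegral]
    apply intervalIntegral.integral_congr
    intro θ _
    simp [hF, hc, mul_assoc]
  have hcF : ∀ z ∈ Metric.ball z₀ R, Continuous (F z) := by
    intro z hz
    apply hccont.mul
    rw [continuous_iff_continuousAt]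
    intro θ
    have h1 := (hdiffat _ (h23 (hmem z hz _ (hcm θ).le))).continuousAt
    have h2 : Continuous (fun θ : ℝ => z + circleMap 0 r θ • v) := by
      have := continuous_circleMap 0 r
      fun_prop
    exact ContinuousAt.comp (f := fun θ : ℝ => z + circleMap 0 r θ • v) h1 h2.continuousAt
  have hD : HasFDerivAt (fun z => ∫ θ in (0:ℝ)..2 * Real.pi, F z θ)
      (∫ θ in (0:ℝ)..2 * Real.pi, F' z₀ θ) z₀ := by
    apply intervalIntegral.hasFDerivAt_integral_of_dominated_of_fderiv_le
      (bound := fun _ => r * (1 / r ^ 2) * (2 * M / R)) (Metric.ball_mem_nhds z₀ hR)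
    · filter_upwards [Metric.ball_mem_nhds z₀ hR] with z hz
      exact (hcF z hz).aestronglyMeasurable
    · exact (hcF z₀ (Metric.mem_ball_self hR)).intervalIntegrable _ _
    · have h2 : Continuous (fun θ : ℝ => z₀ + circleMap 0 r θ • v) := by
        have := continuous_circleMap 0 r
        fun_prop
      have h3 : Measurable (F' z₀) :=
        hccont.measurable.smul ((measurable_fderiv ℂ f).comp h2.measurable)
      exact h3.aestronglyMeasurable
    · refine Eventually.of_forall fun θ _ z hz => ?_
      rw [hF', norm_smul, hcn]
      have := hbd _ (hmem z hz _ (hcm θ).le)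
      gcongr
    · exact intervalIntegrable_const
    · refine Eventually.of_forall fun θ _ z hz => ?_
      have h1 := (hdiffat _ (h23 (hmem z hz _ (hcm θ).le))).hasFDerivAt
      have h2 : HasFDerivAt (fun z => f (z + circleMap 0 r θ • v))
          (fderiv ℂ f (z + circleMap 0 r θ • v)) z := by
        have h3 := h1.comp (f := fun z => z + circleMap 0 r θ • v) z
          ((hasFDerivAt_id z).add_const _)
        rwa [ContinuousLinearMap.comp_id] at h3
      exact h2.const_mul (c θ)
  refine DifferentiableAt.congr_of_eventuallyEq
    (f := fun z => (2 * Real.pi * Complex.I)⁻¹ * ∫ θ in (0:ℝ)..2 * Real.pi, F z θ)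
    (hD.differentiableAt.const_mul _) ?_
  filter_upwards [Metric.ball_mem_nhds z₀ hR] with z hz using hkey z hz

/-- Homogeneous Taylor coefficients are polynomials. -/
theorem aux_taylorPoly {n : ℕ} {U : Set (Fin n → ℂ)} (hU : IsOpen U) (h0 : 0 ∈ U) (j : ℕ) :
    ∀ f : (Fin n → ℂ) → ℂ, DifferentiableOn ℂ f U → ∃ p : MvPolynomial (Fin n) ℂ,
      ∀ z, iteratedDeriv j (fun s : ℂ => f (s • z)) 0 = mvEval p z := by
  induction j with
  | zero =>
    intro f _
    exact ⟨MvPolynomial.C (f 0), fun z => by simp [mvEval]⟩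
  | succ j ih =>
    intro f hf
    have hpd := fun i : Fin n => aux_dirDeriv hU hf (Pi.single i 1)
    choose p hp using fun i => ih _ (hpd i)
    refine ⟨∑ i, MvPolynomial.X i * p i, fun z => ?_⟩
    have hV : IsOpen {s : ℂ | s • z ∈ U} := hU.preimage (by fun_prop)
    have h0V : (0:ℂ) ∈ {s : ℂ | s • z ∈ U} := by simpa using h0
    have hsm : ∀ s : ℂ, HasDerivAt (fun s : ℂ => s • z) z s := fun s => by
      simpa using (hasDerivAt_id s).smul_const z
    have hder : deriv (fun s : ℂ => f (s • z)) =ᶠ[𝓝 0]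
        fun s => ∑ i, z i * fderiv ℂ f (s • z) (Pi.single i 1) := by
      filter_upwards [hV.mem_nhds h0V] with s hs
      have h1 := (hf.differentiableAt (hU.mem_nhds hs)).hasFDerivAt
      have h2 : deriv (fun s : ℂ => f (s • z)) s = fderiv ℂ f (s • z) z :=
        (h1.comp_hasDerivAt (f := fun s : ℂ => s • z) s (hsm s)).deriv
      rw [h2]
      exact aux_lin _ z
    rw [iteratedDeriv_succ', hder.iteratedDeriv_eq, iteratedDeriv_fun_sum]
    · simp only [mvEval, map_sum, map_mul, MvPolynomial.eval_X]
      refine Finset.sum_congr rfl fun i _ => ?_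
      rw [iteratedDeriv_const_mul_field, hp i z]; rfl
    · intro i _
      apply contDiffAt_const.mul
      have : DifferentiableOn ℂ (fun s : ℂ => fderiv ℂ f (s • z) (Pi.single i 1))
          {s : ℂ | s • z ∈ U} :=
        (hpd i).comp (f := fun s : ℂ => s • z)
          (fun s _ => (hsm s).differentiableAt.differentiableWithinAt) (fun s hs => hs)
      exact (this.analyticAt (hV.mem_nhds h0V)).contDiffAt

/-- Uniform approximability by polynomials on `K`. -/
def PolyApp {n : ℕ} (K : Set (Fin n → ℂ)) (F : (Fin n → ℂ) → ℂ) : Prop :=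
  ∀ ε : ℝ, 0 < ε → ∃ p : MvPolynomial (Fin n) ℂ, ∀ z ∈ K, ‖F z - mvEval p z‖ < ε

theorem PolyApp.of_poly {n : ℕ} {K : Set (Fin n → ℂ)} {F : (Fin n → ℂ) → ℂ}
    (p : MvPolynomial (Fin n) ℂ) (h : ∀ z ∈ K, F z = mvEval p z) : PolyApp K F :=
  fun ε hε => ⟨p, fun z hz => by simpa [h z hz] using hε⟩

theorem PolyApp.add {n : ℕ} {K : Set (Fin n → ℂ)} {F G : (Fin n → ℂ) → ℂ}
    (hF : PolyApp K F) (hG : PolyApp K G) : PolyApp K (fun z => F z + G z) := by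
  intro ε hε
  obtain ⟨p, hp⟩ := hF (ε / 2) (by positivity)
  obtain ⟨q, hq⟩ := hG (ε / 2) (by positivity)
  refine ⟨p + q, fun z hz => ?_⟩
  have h : F z + G z - mvEval (p + q) z = (F z - mvEval p z) + (G z - mvEval q z) := by
    simp only [mvEval, map_add]; ring
  rw [h]
  linarith [norm_add_le (F z - mvEval p z) (G z - mvEval q z), hp z hz, hq z hz]

theorem PolyApp.mul_poly {n : ℕ} {K : Set (Fin n → ℂ)} {F : (Fin n → ℂ) → ℂ}
    (hF : PolyApp K F) (q : MvPolynomial (Fin n) ℂ) {B : ℝ} (hB : ∀ z ∈ K, ‖mvEval q z‖ ≤ B) :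
    PolyApp K (fun z => mvEval q z * F z) := by
  intro ε hε
  have hB1 : 0 < |B| + 1 := by positivity
  obtain ⟨p, hp⟩ := hF (ε / (|B| + 1)) (by positivity)
  refine ⟨q * p, fun z hz => ?_⟩
  have h : mvEval q z * F z - mvEval (q * p) z = mvEval q z * (F z - mvEval p z) := by
    simp only [mvEval, map_mul]; ring
  rw [h, norm_mul]
  have h1 : ‖mvEval q z‖ < |B| + 1 := by linarith [hB z hz, le_abs_self B]
  calc ‖mvEval q z‖ * ‖F z - mvEval p z‖ ≤ (|B| + 1) * ‖F z - mvEval p z‖ := by gcongr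
    _ < (|B| + 1) * (ε / (|B| + 1)) := by
      gcongr
      exact hp z hz
    _ = ε := by field_simp

theorem PolyApp.const_mul {n : ℕ} {K : Set (Fin n → ℂ)} {F : (Fin n → ℂ) → ℂ}
    (hF : PolyApp K F) (c : ℂ) : PolyApp K (fun z => c * F z) := by
  have := hF.mul_poly (MvPolynomial.C c) (B := ‖c‖) (fun z _ => by simp [mvEval])
  simpa [mvEval] using this

theorem PolyApp.sum {n : ℕ} {K : Set (Fin n → ℂ)} {F : ℕ → (Fin n → ℂ) → ℂ}
    (hF : ∀ k, PolyApp K (F k)) (N : ℕ) : PolyApp K (fun z => ∑ k ∈ Finset.range N, F k z) := by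
  induction N with
  | zero => exact PolyApp.of_poly 0 (fun z _ => by simp [mvEval])
  | succ N ih =>
    simp only [Finset.sum_range_succ]
    exact ih.add (hF N)

theorem PolyApp.limit {n : ℕ} {K : Set (Fin n → ℂ)} {F : (Fin n → ℂ) → ℂ}
    (h : ∀ ε : ℝ, 0 < ε → ∃ G, PolyApp K G ∧ ∀ z ∈ K, ‖F z - G z‖ < ε) : PolyApp K F := by
  intro ε hε
  obtain ⟨G, hG, hFG⟩ := h (ε / 2) (by positivity)
  obtain ⟨p, hp⟩ := hG (ε / 2) (by positivity)
  refine ⟨p, fun z hz => ?_⟩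
  linarith [norm_sub_le_norm_sub_add_norm_sub (F z) (G z) (mvEval p z), hFG z hz, hp z hz]

theorem PolyApp.congr {n : ℕ} {K : Set (Fin n → ℂ)} {F G : (Fin n → ℂ) → ℂ}
    (hF : PolyApp K F) (h : ∀ z ∈ K, G z = F z) : PolyApp K G := by
  intro ε hε
  obtain ⟨p, hp⟩ := hF ε hε
  exact ⟨p, fun z hz => by rw [h z hz]; exact hp z hz⟩

theorem aux_iterDiff {U : Set ℂ} (hU : IsOpen U) {f : ℂ → ℂ} (hf : DifferentiableOn ℂ f U)
    (j : ℕ) : DifferentiableOn ℂ (iteratedDeriv j f) U := by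
  induction j with
  | zero => simpa using hf
  | succ j ih => rw [iteratedDeriv_succ]; exact ih.deriv hU

theorem aux_iter_iter (f : ℂ → ℂ) (k j : ℕ) :
    iteratedDeriv k (iteratedDeriv j f) = iteratedDeriv (k + j) f := by
  simp only [iteratedDeriv_eq_iterate, Function.iterate_add_apply]

theorem aux_step {n : ℕ} {K : Set (Fin n → ℂ)} {g : (Fin n → ℂ) → ℂ → ℂ} {δ M : ℝ} (hδ : 0 < δ)
    {s₀ s : ℂ} (hs : ‖s - s₀‖ ≤ δ / 4)
    (hg : ∀ z ∈ K, DifferentiableOn ℂ (g z) (Metric.ball s₀ δ))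
    (hM : ∀ z ∈ K, ∀ t ∈ Metric.ball s₀ δ, ‖g z t‖ ≤ M)
    (h0 : ∀ j, PolyApp K (fun z => iteratedDeriv j (g z) s₀)) (j : ℕ) :
    PolyApp K (fun z => iteratedDeriv j (g z) s) := by
  set C : ℝ := j.factorial * M / (δ / 3) ^ j with hC
  have hbd : ∀ z ∈ K, ∀ t ∈ Metric.closedBall s₀ (δ / 2), ‖iteratedDeriv j (g z) t‖ ≤ C := by
    intro z hz t ht
    have hsub : Metric.closedBall t (δ / 3) ⊆ Metric.ball s₀ δ := by
      apply Metric.closedBall_subset_ball'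
      rw [Metric.mem_closedBall] at ht
      linarith
    apply Complex.norm_iteratedDeriv_le_of_forall_mem_sphere_norm_le j (by positivity)
    · exact (((hg z hz).mono hsub).mono Metric.closure_ball_subset_closedBall).diffContOnCl
    · intro w hw
      exact hM z hz w (hsub (Metric.sphere_subset_closedBall hw))
  have hcoef : ∀ z ∈ K, ∀ k, ‖iteratedDeriv k (iteratedDeriv j (g z)) s₀‖ ≤
      k.factorial * C / (δ / 2) ^ k := by
    intro z hz k
    have hsub : Metric.closedBall s₀ (δ / 2) ⊆ Metric.ball s₀ δ :=
      Metric.closedBall_subset_ball (by linarith)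
    apply Complex.norm_iteratedDeriv_le_of_forall_mem_sphere_norm_le k (by positivity)
    · exact (((aux_iterDiff Metric.isOpen_ball (hg z hz) j).mono hsub).mono
        Metric.closure_ball_subset_closedBall).diffContOnCl
    · intro w hw
      exact hbd z hz w (Metric.sphere_subset_closedBall hw)
  apply PolyApp.limit
  intro ε hε
  have htend : Tendsto (fun N : ℕ => C * (1 / 2 : ℝ) ^ N / (1 - 1 / 2)) atTop (𝓝 0) := by
    have := ((tendsto_pow_atTop_nhds_zero_of_lt_one (r := (1 / 2 : ℝ)) (by norm_num)
      (by norm_num)).const_mul C).div_const (1 - 1 / 2)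
    simpa using this
  obtain ⟨N, hN⟩ := (htend.eventually (gt_mem_nhds hε)).exists
  refine ⟨fun z => ∑ k ∈ Finset.range N,
    (((k.factorial : ℂ)⁻¹ * (s - s₀) ^ k) * iteratedDeriv (k + j) (g z) s₀), ?_, ?_⟩
  · exact PolyApp.sum (fun k => (h0 (k + j)).const_mul _) N
  · intro z hz
    have hmem : s ∈ Metric.ball s₀ δ := by
      rw [mem_ball_iff_norm]; linarith
    have hsum := Complex.hasSum_taylorSeries_on_ball
      (aux_iterDiff Metric.isOpen_ball (hg z hz) j) hmem
    have hle := norm_sub_le_of_geometric_bound_of_hasSum (r := 1 / 2) (C := C) (by norm_num) ?_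
      hsum N
    · rw [norm_sub_rev]
      refine lt_of_eq_of_lt ?_ (lt_of_le_of_lt hle hN)
      congr 2
      refine Finset.sum_congr rfl fun k _ => ?_
      rw [aux_iter_iter, smul_eq_mul, smul_eq_mul, mul_assoc]
    · intro k
      have hC0 : 0 ≤ C := (norm_nonneg _).trans
        (hbd z hz s₀ (Metric.mem_closedBall_self (by positivity)))
      have hk : (0:ℝ) < k.factorial := by exact_mod_cast k.factorial_pos
      rw [norm_smul, norm_smul, norm_inv, norm_pow, Complex.norm_natCast]
      calc (k.factorial : ℝ)⁻¹ * (‖s - s₀‖ ^ k * ‖iteratedDeriv k (iteratedDeriv j (g z)) s₀‖)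
          ≤ (k.factorial : ℝ)⁻¹ * ((δ / 4) ^ k * (k.factorial * C / (δ / 2) ^ k)) := by
            gcongr
            exact hcoef z hz k
        _ = C * ((δ / 4) / (δ / 2)) ^ k := by
            rw [div_pow (δ / 4)]; field_simp
        _ = C * (1 / 2) ^ k := by
            congr 2; field_simp; norm_num

theorem aux_path {n : ℕ} {K : Set (Fin n → ℂ)} {g : (Fin n → ℂ) → ℂ → ℂ} {δ M : ℝ} (hδ : 0 < δ)
    (hg : ∀ z ∈ K, ∀ s₀ ∈ Icc (0:ℝ) 1, DifferentiableOn ℂ (g z) (Metric.ball (s₀ : ℂ) δ))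
    (hM : ∀ z ∈ K, ∀ s₀ ∈ Icc (0:ℝ) 1, ∀ t ∈ Metric.ball (s₀ : ℂ) δ, ‖g z t‖ ≤ M)
    (h0 : ∀ j, PolyApp K (fun z => iteratedDeriv j (g z) 0)) :
    PolyApp K (fun z => g z 1) := by
  obtain ⟨N, hN⟩ := exists_nat_gt (4 / δ)
  have hNpos : (0:ℝ) < N := lt_trans (by positivity) hN
  have hNs : 1 / (N : ℝ) ≤ δ / 4 := by
    rw [div_le_iff₀ hNpos]
    rw [div_lt_iff₀ hδ] at hN
    linarith
  have key : ∀ k : ℕ, k ≤ N → ∀ j,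
      PolyApp K (fun z => iteratedDeriv j (g z) (((k : ℝ) / N : ℝ) : ℂ)) := by
    intro k
    induction k with
    | zero => intro _; simpa using h0
    | succ k ih =>
      intro hk
      have hmem : (k : ℝ) / N ∈ Icc (0:ℝ) 1 := by
        refine ⟨by positivity, ?_⟩
        rw [div_le_one hNpos]
        exact_mod_cast (Nat.le_of_succ_le hk)
      refine aux_step hδ ?_ (fun z hz => hg z hz _ hmem) (fun z hz => hM z hz _ hmem)
        (ih (Nat.le_of_succ_le hk))
      rw [← Complex.ofReal_sub, Complex.norm_real, ← sub_div]
      push_cast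
      rw [add_sub_cancel_left, Real.norm_of_nonneg (by positivity)]
      exact hNs
  have := key N le_rfl 0
  simpa [div_self hNpos.ne', div_self (Nat.cast_ne_zero.2 (Nat.cast_pos.1 hNpos).ne' : (N:ℂ) ≠ 0)]
    using this

/-- Runge property for star-shaped open sets. -/
theorem aux_star {n : ℕ} {Ω K : Set (Fin n → ℂ)} (hΩ : IsOpen Ω) {a : Fin n → ℂ} (ha : a ∈ Ω)
    (hst : StarConvex ℝ a Ω) (hK : IsCompact K) (hKΩ : K ⊆ Ω) {f : (Fin n → ℂ) → ℂ}
    (hf : DifferentiableOn ℂ f Ω) : PolyApp K f := by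
  set Φ : ℂ × (Fin n → ℂ) → (Fin n → ℂ) := fun q => a + q.1 • (q.2 - a) with hΦ
  have hΦc : Continuous Φ := by fun_prop
  set S : Set ℂ := (fun t : ℝ => (t : ℂ)) '' Icc 0 1
  have hS : IsCompact S := isCompact_Icc.image Complex.continuous_ofReal
  have hsub : S ×ˢ K ⊆ Φ ⁻¹' Ω := by
    rintro ⟨_, z⟩ ⟨⟨t, ht, rfl⟩, hz⟩
    have := hst.add_smul_sub_mem (hKΩ hz) ht.1 ht.2
    simpa [hΦ, Complex.coe_smul] using this
  obtain ⟨δ, hδ, hcth⟩ := (hS.prod hK).exists_cthickening_subset_open (hΩ.preimage hΦc) hsub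
  have hcpt : IsCompact (Metric.cthickening δ (S ×ˢ K)) := (hS.prod hK).cthickening
  have hcont : ContinuousOn (fun q => f (Φ q)) (Metric.cthickening δ (S ×ˢ K)) :=
    hf.continuousOn.comp hΦc.continuousOn hcth
  obtain ⟨M, hM⟩ := hcpt.exists_bound_of_continuousOn hcont
  have hin : ∀ z ∈ K, ∀ s₀ ∈ Icc (0:ℝ) 1, ∀ t ∈ Metric.ball (s₀ : ℂ) δ,
      (t, z) ∈ Metric.cthickening δ (S ×ˢ K) := by
    intro z hz s₀ hs₀ t ht
    have hmem : ((s₀ : ℂ), z) ∈ S ×ˢ K := ⟨⟨s₀, hs₀, rfl⟩, hz⟩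
    apply Metric.mem_cthickening_of_dist_le (t, z) ((s₀ : ℂ), z) _ _ hmem
    rw [Prod.dist_eq, dist_self]
    exact max_le (Metric.mem_ball.1 ht).le hδ.le
  have hres : PolyApp K (fun z => f (Φ (1, z))) := by
    refine aux_path (g := fun z s => f (Φ (s, z))) hδ (M := M) ?_ ?_ ?_
    · intro z hz s₀ hs₀
      refine hf.comp (f := fun s => Φ (s, z)) ?_ (fun t ht => hcth (hin z hz s₀ hs₀ t ht))
      intro t _
      apply DifferentiableAt.differentiableWithinAt
      simp only [hΦ]
      fun_prop
    · intro z hz s₀ hs₀ t ht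
      exact hM _ (hin z hz s₀ hs₀ t ht)
    · intro j
      obtain ⟨p, hp⟩ := aux_taylorPoly (U := (fun w => a + w) ⁻¹' Ω)
        (hΩ.preimage (by fun_prop)) (by simpa using ha) j (fun w => f (a + w))
        (hf.comp (f := fun w => a + w) (by fun_prop) (fun w hw => hw))
      refine PolyApp.of_poly
        (MvPolynomial.bind₁ (fun i => MvPolynomial.X i - MvPolynomial.C (a i)) p) ?_
      intro z _
      have h1 := hp (z - a)
      simp only [hΦ]
      rw [h1]
      simp only [mvEval]
      rw [← MvPolynomial.coe_aeval_eq_eval, ← MvPolynomial.coe_aeval_eq_eval]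
      simp only [RingHom.coe_coe, MvPolynomial.aeval_bind₁]
      congr 2
      ext i
      simp
  refine hres.congr fun z _ => ?_
  simp [hΦ]

theorem aux_sqrt_pos {w : ℂ} (hw : 0 < w.re) :
    w ^ 2 ∈ Complex.slitPlane ∧ w * Complex.exp (-(Complex.log (w ^ 2)) / 2) = 1 := by
  have hw0 : w ≠ 0 := by rintro rfl; simp at hw
  have harg := Complex.abs_arg_lt_pi_div_two_iff.2 (Or.inl hw)
  rw [abs_lt] at harg
  have hlog : Complex.log (w ^ 2) = 2 * Complex.log w := by
    have h := Complex.log_exp (x := 2 * Complex.log w)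
      (by simp [Complex.log_im]; linarith [harg.1]) (by simp [Complex.log_im]; linarith [harg.2])
    rw [← h, two_mul, Complex.exp_add, Complex.exp_log hw0, pow_two]
  constructor
  · rw [Complex.mem_slitPlane_iff]
    by_cases him : w.im = 0
    · left; simp [pow_two, him]; positivity
    · right; simp [pow_two]; ring_nf; simp [him, hw.ne']
  · rw [hlog, show -(2 * Complex.log w) / 2 = -Complex.log w by ring, Complex.exp_neg,
      Complex.exp_log hw0, mul_inv_cancel₀ hw0]

theorem aux_sqrt_neg {w : ℂ} (hw : w.re < 0) :
    w ^ 2 ∈ Complex.slitPlane ∧ w * Complex.exp (-(Complex.log (w ^ 2)) / 2) = -1 := by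
  have h := aux_sqrt_pos (w := -w) (by simpa using hw)
  rw [neg_sq] at h
  exact ⟨h.1, by linear_combination -h.2⟩

theorem aux_continuous {n : ℕ} (p : MvPolynomial (Fin n) ℂ) : Continuous (mvEval p) :=
  MvPolynomial.continuous_eval p

/-- The sign of the real part of a polynomial is polynomially approximable. -/
theorem aux_sign {n : ℕ} {L : Set (Fin n → ℂ)} (hL : IsCompact L) (W : MvPolynomial (Fin n) ℂ)
    (hW : ∀ z ∈ L, (mvEval W z).re ≠ 0) :
    PolyApp L (fun z => mvEval W z * Complex.exp (-(Complex.log (mvEval W z ^ 2)) / 2)) := by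
  have hslit : ∀ z ∈ L, mvEval W z ^ 2 ∈ Complex.slitPlane := by
    intro z hz
    rcases lt_or_gt_of_ne (hW z hz) with h | h
    · exact (aux_sqrt_neg h).1
    · exact (aux_sqrt_pos h).1
  obtain ⟨B, hB⟩ := hL.exists_bound_of_continuousOn (aux_continuous W).continuousOn
  refine PolyApp.mul_poly ?_ W hB
  set ψ : (Fin n → ℂ) → (Fin 1 → ℂ) := fun z _ => mvEval W z ^ 2 with hψ
  have hψc : Continuous ψ := continuous_pi fun _ => (aux_continuous W).pow 2
  set Ω : Set (Fin 1 → ℂ) := (fun v => v 0) ⁻¹' Complex.slitPlane with hΩ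
  have happ : PolyApp (ψ '' L) (fun v : Fin 1 → ℂ => Complex.exp (-(Complex.log (v 0)) / 2)) := by
    refine aux_star (Ω := Ω) (a := fun _ => 1) ?_ ?_ ?_ (hL.image hψc) ?_ ?_
    · exact Complex.isOpen_slitPlane.preimage (continuous_apply 0)
    · exact Complex.one_mem_slitPlane
    · intro v hv s t hs ht hst
      exact Complex.starConvex_one_slitPlane hv hs ht hst
    · rintro _ ⟨z, hz, rfl⟩
      exact hslit z hz
    · intro v hv
      apply DifferentiableAt.differentiableWithinAt
      have h1 : DifferentiableAt ℂ (fun v : Fin 1 → ℂ => v 0) v := by fun_prop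
      have h2 : DifferentiableAt ℂ (fun x : ℂ => Complex.exp (-(Complex.log x) / 2)) (v 0) :=
        ((differentiableAt_id.clog hv).neg.div_const (2:ℂ)).cexp
      exact h2.comp (f := fun v : Fin 1 → ℂ => v 0) v h1
  intro ε hε
  obtain ⟨p, hp⟩ := happ ε hε
  refine ⟨MvPolynomial.bind₁ (fun _ => W ^ 2) p, fun z hz => ?_⟩
  have h1 := hp (ψ z) (mem_image_of_mem _ hz)
  have h2 : mvEval (MvPolynomial.bind₁ (fun _ => W ^ 2) p) z = mvEval p (ψ z) := by
    simp only [mvEval]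
    rw [← MvPolynomial.coe_aeval_eq_eval, ← MvPolynomial.coe_aeval_eq_eval]
    simp only [RingHom.coe_coe, MvPolynomial.aeval_bind₁]
    congr 2
    ext i
    simp [hψ, mvEval, MvPolynomial.aeval_eq_eval]
  rw [h2]
  exact h1

theorem aux_convex {n : ℕ} {Ω K : Set (Fin n → ℂ)} (hΩ : IsOpen Ω) (hcv : Convex ℝ Ω)
    (hK : IsCompact K) (hKΩ : K ⊆ Ω) {f : (Fin n → ℂ) → ℂ}
    (hf : DifferentiableOn ℂ f Ω) : PolyApp K f := by
  rcases K.eq_empty_or_nonempty with rfl | ⟨a, ha⟩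
  · exact PolyApp.of_poly 0 (fun z hz => hz.elim)
  · exact aux_star hΩ (hKΩ ha) (hcv.starConvex (hKΩ ha)) hK hKΩ hf

/-- the union of two disjoint open convex sets is a Runge domain. -/
theorem runge_union_two_open_convex (n : ℕ) (Ω₁ Ω₂ : Set (Fin n → ℂ))
    (hΩ₁o : IsOpen Ω₁) (hΩ₁cv : Convex ℝ Ω₁)
    (hΩ₂o : IsOpen Ω₂) (hΩ₂cv : Convex ℝ Ω₂)
    (hdisj : Disjoint Ω₁ Ω₂)
    (f : (Fin n → ℂ) → ℂ) (hf : DifferentiableOn ℂ f (Ω₁ ∪ Ω₂))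
    (L : Set (Fin n → ℂ)) (hLcpt : IsCompact L) (hLsub : L ⊆ Ω₁ ∪ Ω₂)
    (ε : ℝ) (hε : 0 < ε) :
    ∃ Q : MvPolynomial (Fin n) ℂ, ∀ z ∈ L, ‖f z - mvEval Q z‖ < ε := by
  have hL₁ : L \ Ω₂ ⊆ Ω₁ := fun z hz => (hLsub hz.1).resolve_right hz.2
  have hL₂ : L \ Ω₁ ⊆ Ω₂ := fun z hz => (hLsub hz.1).resolve_left hz.2
  obtain ⟨P₁, hP₁⟩ := aux_convex hΩ₁o hΩ₁cv (hLcpt.diff hΩ₂o) hL₁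
    (hf.mono subset_union_left) (ε / 2) (by positivity)
  obtain ⟨P₂, hP₂⟩ := aux_convex hΩ₂o hΩ₂cv (hLcpt.diff hΩ₁o) hL₂
    (hf.mono subset_union_right) (ε / 2) (by positivity)
  obtain ⟨T, u, hT₁, hT₂⟩ :=
    RCLike.geometric_hahn_banach_open_open (𝕜 := ℂ) hΩ₁cv hΩ₁o hΩ₂cv hΩ₂o hdisj
  set W : MvPolynomial (Fin n) ℂ :=
    ∑ i, MvPolynomial.X i * MvPolynomial.C (T (Pi.single i 1)) - MvPolynomial.C (u : ℂ) with hWdef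
  have hW : ∀ z, mvEval W z = T z - u := by
    intro z
    simp [mvEval, hWdef, aux_lin T z]
  have hneg : ∀ z ∈ Ω₁, (mvEval W z).re < 0 := by
    intro z hz
    have := hT₁ z hz
    simp only [RCLike.re_to_complex] at this
    rw [hW, Complex.sub_re, Complex.ofReal_re]; linarith
  have hpos : ∀ z ∈ Ω₂, 0 < (mvEval W z).re := by
    intro z hz
    have := hT₂ z hz
    simp only [RCLike.re_to_complex] at this
    rw [hW, Complex.sub_re, Complex.ofReal_re]; linarith
  have hsign := aux_sign hLcpt W (fun z hz => by
    rcases hLsub hz with h | h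
    · exact (hneg z h).ne
    · exact (hpos z h).ne')
  obtain ⟨B, hB⟩ := hLcpt.exists_bound_of_continuousOn
    (aux_continuous (MvPolynomial.C (1 / 2) * (P₂ - P₁))).continuousOn
  obtain ⟨Q, hQ⟩ := ((PolyApp.of_poly (K := L) (F := mvEval (MvPolynomial.C (1 / 2) * (P₂ + P₁)))
    _ (fun _ _ => rfl)).add (hsign.mul_poly _ hB)) (ε / 2) (by positivity)
  refine ⟨Q, fun z hz => ?_⟩
  have hq := hQ z hz
  beta_reduce at hq
  rcases hLsub hz with h | h
  · have h1 := hP₁ z ⟨hz, fun h' => hdisj.le_bot ⟨h, h'⟩⟩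
    rw [(aux_sqrt_neg (hneg z h)).2] at hq
    have h2 : mvEval (MvPolynomial.C (1 / 2) * (P₂ + P₁)) z +
        mvEval (MvPolynomial.C (1 / 2) * (P₂ - P₁)) z * -1 = mvEval P₁ z := by
      simp only [mvEval, map_mul, map_add, map_sub, MvPolynomial.eval_C]; ring
    rw [h2] at hq
    linarith [norm_sub_le_norm_sub_add_norm_sub (f z) (mvEval P₁ z) (mvEval Q z)]
  · have h1 := hP₂ z ⟨hz, fun h' => hdisj.le_bot ⟨h', h⟩⟩
    rw [(aux_sqrt_pos (hpos z h)).2] at hq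
    have h2 : mvEval (MvPolynomial.C (1 / 2) * (P₂ + P₁)) z +
        mvEval (MvPolynomial.C (1 / 2) * (P₂ - P₁)) z * 1 = mvEval P₂ z := by
      simp only [mvEval, map_mul, map_add, map_sub, MvPolynomial.eval_C]; ring
    rw [h2] at hq
    linarith [norm_sub_le_norm_sub_add_norm_sub (f z) (mvEval P₂ z) (mvEval Q z)]

end
end

section
/- Let Ω₁ and Ω₂ be two disjoint open convex subsets of ℂⁿ and let f be holomorphic on Ω₁ ∪ Ω₂. Then for every compact set L ⊆ Ω₁ ∪ Ω₂, every finite set F of multi-indices in ℕⁿ, and every ε > 0, there exists a holomorphic polynomial Q on ℂⁿ such that sup_{z ∈ L} ‖D^ℓ f(z) − D^ℓ Q(z)‖ < ε for every ℓ ∈ F (in particular, taking ℓ = 0, Q approximates f itself uniformly on L). -/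
open Set Filter Topology

noncomputable section

lemma rg_fderiv_bound {n : ℕ} {f : (Fin n → ℂ) → ℂ} {p : Fin n → ℂ} {ρ M : ℝ} (hρ : 0 < ρ)
    (hf : DifferentiableOn ℂ f (Metric.ball p ρ)) (hM : ∀ z ∈ Metric.ball p ρ, ‖f z‖ ≤ M) :
    ‖fderiv ℂ f p‖ ≤ 2 * M / ρ := by
  refine Complex.norm_fderiv_le_div_of_mapsTo_ball hf ?_ hρ
  intro z hz
  rw [mem_closedBall_iff_norm]
  have h1 := hM z hz
  have h2 := hM p (Metric.mem_ball_self hρ)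
  have := norm_sub_le (f z) (f p)
  linarith

lemma rg_second_order {n : ℕ} {f : (Fin n → ℂ) → ℂ} {p h : Fin n → ℂ} {ρ M : ℝ} (hρ : 0 < ρ)
    (hf : DifferentiableOn ℂ f (Metric.ball p ρ)) (hM : ∀ z ∈ Metric.ball p ρ, ‖f z‖ ≤ M)
    (hh : ‖h‖ < ρ) :
    ‖f (p + h) - f p - fderiv ℂ f p h‖ ≤ 4 * M * (‖h‖ / ρ) ^ 2 := by
  have hb := rg_fderiv_bound hρ hf hM
  have hp := Metric.mem_ball_self (x := p) hρ
  have hM0 : 0 ≤ M := (norm_nonneg _).trans (hM p hp)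
  have hfd : HasFDerivAt f (fderiv ℂ f p) p :=
    (hf.differentiableAt (Metric.isOpen_ball.mem_nhds hp)).hasFDerivAt
  have key := Complex.dist_le_mul_div_pow_of_mapsTo_ball_of_isLittleO (n := 1)
    (f := fun z => f z - fderiv ℂ f p (z - p)) (c := p) (R₁ := ρ) (R₂ := 4 * M) (z := p + h)
    (by
      refine hf.sub ?_
      fun_prop) ?_ ?_ (by simpa using hh)
  · simp only [add_sub_cancel_left, sub_self, map_zero, sub_zero, dist_eq_norm] at key
    rw [sub_right_comm]
    simpa using key
  · intro z hz
    simp only [sub_self, map_zero, sub_zero, mem_closedBall_iff_norm]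
    have h1 := hM z hz
    have h2 := hM p hp
    have h3 : ‖fderiv ℂ f p (z - p)‖ ≤ 2 * M := by
      refine ((fderiv ℂ f p).le_opNorm _).trans ?_
      have : ‖z - p‖ ≤ ρ := by
        rw [Metric.mem_ball, dist_eq_norm] at hz; exact hz.le
      calc _ ≤ 2 * M / ρ * ρ := by gcongr
        _ = 2 * M := by field_simp
    have h4 := norm_sub_le (f z - fderiv ℂ f p (z - p)) (f p)
    have h5 := norm_sub_le (f z) (fderiv ℂ f p (z - p))
    linarith
  · have := hfd.isLittleO
    simp only [sub_self, map_zero, sub_zero, pow_one]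
    refine (this.norm_right).congr_left fun z => ?_
    ring

lemma rg_pd_diff {n : ℕ} {f : (Fin n → ℂ) → ℂ} {Ω : Set (Fin n → ℂ)} (hΩ : IsOpen Ω)
    (hf : DifferentiableOn ℂ f Ω) (i : Fin n) : DifferentiableOn ℂ (pd i f) Ω := by
  intro p hp
  obtain ⟨r, hr, hrs⟩ := Metric.nhds_basis_closedBall.mem_iff.1 (hΩ.mem_nhds hp)
  obtain ⟨M, hM⟩ := (isCompact_closedBall p r).exists_bound_of_continuousOn
    (hf.continuousOn.mono hrs)
  set ρ := r / 3 with hρd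
  have hρ : 0 < ρ := by positivity
  set v : Fin n → ℂ := Pi.single i 1 with hv
  have hv1 : ‖v‖ = 1 := by rw [hv, Pi.norm_single]; simp
  set k : ℝ → ℂ := fun θ => deriv (circleMap 0 ρ) θ * ((circleMap 0 ρ θ) ^ 2)⁻¹ with hk
  have hkc : Continuous k := by
    simp only [hk, deriv_circleMap]
    refine Continuous.mul (by fun_prop) (Continuous.inv₀ (by fun_prop) fun θ => ?_)
    exact pow_ne_zero _ (circleMap_ne_center hρ.ne')
  have hcn : ∀ θ, ‖circleMap 0 ρ θ • v‖ = ρ := by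
    intro θ; rw [norm_smul, hv1]; simp [abs_of_pos hρ]
  have hin : ∀ x ∈ Metric.ball p ρ, ∀ w : ℂ, ‖w‖ ≤ ρ → 
      Metric.ball (x + w • v) ρ ⊆ Metric.closedBall p r := by
    intro x hx w hw z hz
    rw [mem_ball_iff_norm] at hx hz
    rw [mem_closedBall_iff_norm]
    have e : z - p = (z - (x + w • v)) + (x - p) + w • v := by abel
    have h1 : ‖w • v‖ ≤ ρ := by rw [norm_smul, hv1, mul_one]; exact hw
    rw [e]
    refine (norm_add₃_le).trans ?_
    linarith
  have hcirc : ∀ θ, ‖circleMap 0 ρ θ‖ ≤ ρ := fun θ => by simp [abs_of_pos hρ]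
  have hmem : ∀ x ∈ Metric.ball p ρ, ∀ w : ℂ, ‖w‖ ≤ ρ → x + w • v ∈ Ω := fun x hx w hw =>
    hrs (hin x hx w hw (Metric.mem_ball_self hρ))
  have hcont : ∀ x ∈ Metric.ball p ρ, Continuous fun θ => k θ • f (x + circleMap 0 ρ θ • v) := by
    intro x hx
    refine hkc.smul ?_
    refine hf.continuousOn.comp_continuous (by fun_prop) fun θ => hmem x hx _ (hcirc θ)
  have key := intervalIntegral.hasFDerivAt_integral_of_dominated_of_fderiv_le (𝕜 := ℂ)
    (μ := MeasureTheory.volume) (a := 0) (b := 2 * Real.pi)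
    (F := fun x θ => k θ • f (x + circleMap 0 ρ θ • v))
    (F' := fun x θ => k θ • fderiv ℂ f (x + circleMap 0 ρ θ • v)) (x₀ := p)
    (s := Metric.ball p ρ) (bound := fun θ => ‖k θ‖ * (2 * M / ρ))
    (Metric.ball_mem_nhds p hρ) ?_ ?_ ?_ ?_ ?_ ?_
  · refine (key.const_mul ((2 * Real.pi * Complex.I : ℂ)⁻¹)).differentiableAt.congr_of_eventuallyEq
      ?_ |>.differentiableWithinAt
    filter_upwards [Metric.ball_mem_nhds p hρ] with x hx
    have hda : DifferentiableOn ℂ (fun w : ℂ => f (x + w • v)) ((fun w : ℂ => x + w • v) ⁻¹' Ω) :=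
      hf.comp (by fun_prop) fun w hw => hw
    have hoa : IsOpen ((fun w : ℂ => x + w • v) ⁻¹' Ω) := hΩ.preimage (by fun_prop)
    have h1 := Complex.cderiv_eq_deriv (r := ρ) (z := 0) hoa hda hρ (by
      intro w hw
      exact hmem x hx w (by simpa using hw))
    have h2 : HasDerivAt (fun w : ℂ => f (x + w • v)) (fderiv ℂ f x v) 0 := by
      have hx' : HasFDerivAt f (fderiv ℂ f x) (x + (0:ℂ) • v) := by
        have : x ∈ Ω := by simpa using hmem x hx 0 (by simpa using hρ.le)
        simpa using (hf.differentiableAt (hΩ.mem_nhds this)).hasFDerivAt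
      refine hx'.comp_hasDerivAt (0:ℂ) ?_
      simpa using ((hasDerivAt_id (0:ℂ)).smul_const v).const_add x
    rw [h2.deriv] at h1
    rw [pd, ← h1, Complex.cderiv, circleIntegral, smul_eq_mul]
    congr 1
    refine intervalIntegral.integral_congr fun θ _ => ?_
    simp [hk, mul_assoc]
  · filter_upwards [Metric.ball_mem_nhds p hρ] with x hx
    exact (hcont x hx).aestronglyMeasurable
  · exact (hcont p (Metric.mem_ball_self hρ)).intervalIntegrable _ _
  · refine hkc.aestronglyMeasurable.smul ?_
    have : Measurable fun θ => fderiv ℂ f (p + circleMap 0 ρ θ • v) :=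
      (measurable_fderiv ℂ f).comp (by fun_prop : Continuous fun θ => p + circleMap 0 ρ θ • v).measurable
    exact this.aestronglyMeasurable
  · refine Eventually.of_forall fun θ _ x hx => ?_
    rw [norm_smul]
    gcongr
    exact rg_fderiv_bound hρ (hf.mono ((hin x hx _ (hcirc θ)).trans hrs))
      fun z hz => hM z (hin x hx _ (hcirc θ) hz)
  · exact (by fun_prop : Continuous fun θ => ‖k θ‖ * (2 * M / ρ)).intervalIntegrable _ _
  · refine Eventually.of_forall fun θ _ x hx => ?_
    have hx' : HasFDerivAt f (fderiv ℂ f (x + circleMap 0 ρ θ • v)) (x + circleMap 0 ρ θ • v) :=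
      (hf.differentiableAt (hΩ.mem_nhds (hmem x hx _ (hcirc θ)))).hasFDerivAt
    have := (hx'.comp x ((hasFDerivAt_id x).add_const (circleMap 0 ρ θ • v))).const_smul (k θ)
    exact this

/-- Bundle a function as a continuous map, with junk value `0` if it is not continuous. -/
def rgC {X : Type*} [TopologicalSpace X] (h : X → ℂ) : C(X, ℂ) :=
  open Classical in if hc : Continuous h then ⟨h, hc⟩ else 0

lemma rgC_apply {X : Type*} [TopologicalSpace X] {h : X → ℂ} (hc : Continuous h) (x : X) :
    rgC h x = h x := by
  rw [rgC, dif_pos hc]; rfl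

/-- The `i`-th coordinate of a continuous map into `ℂⁿ`. -/
def rgCoord {X : Type*} [TopologicalSpace X] {n : ℕ} (y : C(X, Fin n → ℂ)) (i : Fin n) : C(X, ℂ) :=
  ⟨fun x => y x i, by fun_prop⟩

lemma rg_isOpen_param {X : Type*} [TopologicalSpace X] [CompactSpace X] {n : ℕ}
    {Ω : Set (Fin n → ℂ)} (hΩ : IsOpen Ω) (y : C(X, Fin n → ℂ)) (c : Fin n → ℂ) :
    IsOpen {r : ℂ | ∀ x, c + r • y x ∈ Ω} := by
  have h1 := ContinuousMap.isOpen_setOfPred_mapsTo (isCompact_univ (X := X)) hΩ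
  have h2 : Continuous fun r : ℂ => ContinuousMap.const X c + r • y := by fun_prop
  convert h1.preimage h2 using 1
  ext r
  simp [MapsTo]

lemma rg_hasDerivAt {X : Type*} [TopologicalSpace X] [CompactSpace X] {n : ℕ}
    {Ω : Set (Fin n → ℂ)} (hΩ : IsOpen Ω) {f : (Fin n → ℂ) → ℂ} (hf : DifferentiableOn ℂ f Ω)
    (y : C(X, Fin n → ℂ)) (c : Fin n → ℂ) (r₀ : ℂ) (hr₀ : ∀ x, c + r₀ • y x ∈ Ω) :
    HasDerivAt (fun r : ℂ => rgC fun x => f (c + r • y x))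
      (∑ i, rgCoord y i * rgC fun x => pd i f (c + r₀ • y x)) r₀ := by
  have hcont : ∀ g : (Fin n → ℂ) → ℂ, DifferentiableOn ℂ g Ω → ∀ r : ℂ, (∀ x, c + r • y x ∈ Ω) →
      Continuous fun x => g (c + r • y x) := fun g hg r hr =>
    hg.continuousOn.comp_continuous (by fun_prop) hr
  obtain ⟨K, hK⟩ : ∃ K : Set (Fin n → ℂ), K = range fun x => c + r₀ • y x := ⟨_, rfl⟩
  have hKc : IsCompact K := by rw [hK]; exact isCompact_range (by fun_prop)
  obtain ⟨δ, hδ, hδs⟩ := hKc.exists_cthickening_subset_open hΩ (by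
    rw [hK]; rintro _ ⟨x, rfl⟩; exact hr₀ x)
  obtain ⟨M, hM⟩ := (hKc.cthickening (r := δ)).exists_bound_of_continuousOn
    (hf.continuousOn.mono hδs)
  have hball : ∀ x, Metric.ball (c + r₀ • y x) δ ⊆ Metric.cthickening δ K := fun x =>
    (Metric.ball_subset_thickening (by rw [hK]; exact ⟨x, rfl⟩) δ).trans
      (Metric.thickening_subset_cthickening _ _)
  rw [hasDerivAt_iff_isLittleO]
  refine Asymptotics.IsBigO.trans_isLittleO ?_ (Asymptotics.isLittleO_pow_sub_sub r₀ one_lt_two)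
  refine Asymptotics.IsBigO.of_bound (4 * |M| * (‖y‖ / δ) ^ 2) ?_
  have hev : ∀ᶠ r : ℂ in 𝓝 r₀, ‖r - r₀‖ * ‖y‖ < δ := by
    have : Continuous fun r : ℂ => ‖r - r₀‖ * ‖y‖ := by fun_prop
    refine this.continuousAt.eventually_lt continuousAt_const ?_
    simpa using hδ
  filter_upwards [hev, (rg_isOpen_param hΩ y c).mem_nhds hr₀] with r hr hrΩ
  rw [ContinuousMap.norm_le _ (by positivity)]
  intro x
  have hh : ‖(r - r₀) • y x‖ ≤ ‖r - r₀‖ * ‖y‖ := by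
    rw [norm_smul]; gcongr; exact y.norm_coe_le_norm x
  have hyx : y x = ∑ i, y x i • (Pi.single i 1 : Fin n → ℂ) := by
    ext j; simp [Finset.sum_apply, Pi.single_apply]
  have e2 : fderiv ℂ f (c + r₀ • y x) ((r - r₀) • y x) =
      (r - r₀) * ∑ i, y x i * pd i f (c + r₀ • y x) := by
    rw [map_smul, smul_eq_mul]
    congr 1
    have gen : ∀ Λ : (Fin n → ℂ) →L[ℂ] ℂ, Λ (y x) = ∑ i, y x i * Λ (Pi.single i 1) := by
      intro Λ
      conv_lhs => rw [hyx]
      simp [map_sum]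
    exact gen _
  have so := rg_second_order hδ (hf.mono ((hball x).trans hδs)) (fun z hz => hM z (hball x hz))
    (h := (r - r₀) • y x) (hh.trans_lt hr)
  have e1 : c + r₀ • y x + (r - r₀) • y x = c + r • y x := by rw [sub_smul]; abel
  rw [e1, e2] at so
  have e3 : ((rgC fun x => f (c + r • y x)) - (rgC fun x => f (c + r₀ • y x)) -
      (r - r₀) • ∑ i, rgCoord y i * rgC fun x => pd i f (c + r₀ • y x)) x =
      f (c + r • y x) - f (c + r₀ • y x) - (r - r₀) * ∑ i, y x i * pd i f (c + r₀ • y x) := by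
    simp only [ContinuousMap.sub_apply, ContinuousMap.smul_apply, ContinuousMap.sum_apply,
      ContinuousMap.mul_apply, smul_eq_mul]
    rw [rgC_apply (hcont f hf r hrΩ), rgC_apply (hcont f hf r₀ hr₀)]
    congr 2
    refine Finset.sum_congr rfl fun i _ => ?_
    rw [rgC_apply (hcont _ (rg_pd_diff hΩ hf i) r₀ hr₀)]
    rfl
  rw [e3]
  refine so.trans ?_
  rw [norm_pow, norm_norm]
  calc 4 * M * (‖(r - r₀) • y x‖ / δ) ^ 2 ≤ 4 * |M| * ((‖r - r₀‖ * ‖y‖) / δ) ^ 2 := by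
        gcongr
        exact le_abs_self M
    _ = _ := by ring

lemma rg_dual {V : Type*} [NormedAddCommGroup V] [NormedSpace ℂ V] (S : Submodule ℂ V)
    (hS : IsClosed (S : Set V)) (v : V) (h : ∀ φ : V →L[ℂ] ℂ, (∀ s ∈ S, φ s = 0) → φ v = 0) :
    v ∈ S := by
  by_contra hv
  have hne : ‖S.mkQL v‖ ≠ 0 := by
    intro h0
    apply hv
    have : v ∈ closure (S : Set V) :=
      (QuotientAddGroup.norm_mk_eq_zero_iff_mem_closure (S := S.toAddSubgroup)).1 h0
    rwa [hS.closure_eq] at this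
  obtain ⟨g, -, hg⟩ := exists_dual_vector ℂ (S.mkQL v) hne
  have h1 := h (g.comp S.mkQL) (fun s hs => by
    have : S.mkQL s = 0 := (Submodule.Quotient.mk_eq_zero S).2 hs
    simp [this])
  rw [ContinuousLinearMap.comp_apply, hg] at h1
  exact hne (by simpa using h1)

lemma rg_star {X : Type*} [TopologicalSpace X] [CompactSpace X] {n : ℕ}
    (S : Subalgebra ℂ C(X, ℂ)) (hS : IsClosed (S : Set C(X, ℂ)))
    {Ω : Set (Fin n → ℂ)} (hΩ : IsOpen Ω) {c : Fin n → ℂ} (hstar : StarConvex ℝ c Ω) (hc : c ∈ Ω)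
    {f : (Fin n → ℂ) → ℂ} (hf : DifferentiableOn ℂ f Ω)
    (g : C(X, Fin n → ℂ)) (hg : ∀ x, g x ∈ Ω) (hgS : ∀ i, rgCoord g i ∈ S) :
    rgC (fun x => f (g x)) ∈ S := by
  set y : C(X, Fin n → ℂ) := g - ContinuousMap.const X c with hy
  have hyS : ∀ i, rgCoord y i ∈ S := by
    intro i
    have : rgCoord y i = rgCoord g i - algebraMap ℂ C(X, ℂ) (c i) := by
      ext x; simp [rgCoord, hy]
    rw [this]
    exact S.sub_mem (hgS i) (S.algebraMap_mem _)
  set U : Set ℂ := {r : ℂ | ∀ x, c + r • y x ∈ Ω} with hU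
  have hUo : IsOpen U := rg_isOpen_param hΩ y c
  have h0U : (0 : ℂ) ∈ U := by intro x; simpa using hc
  have hseg : ∀ t ∈ Icc (0 : ℝ) 1, (t : ℂ) ∈ U := by
    intro t ht x
    have := hstar (hg x) (sub_nonneg.2 ht.2) ht.1 (by ring)
    convert this using 1
    ext j
    simp [hy]
    ring
  have hdiff : ∀ (φ : C(X, ℂ) →L[ℂ] ℂ) (f : (Fin n → ℂ) → ℂ), DifferentiableOn ℂ f Ω →
      AnalyticOnNhd ℂ (fun r : ℂ => φ (rgC fun x => f (c + r • y x))) U := by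
    intro φ f hf
    refine DifferentiableOn.analyticOnNhd (fun r hr => ?_) hUo
    exact (φ.hasFDerivAt.comp_hasDerivAt r
      (rg_hasDerivAt hΩ hf y c r hr)).differentiableAt.differentiableWithinAt
  have hord : ∀ (m : ℕ) (φ : C(X, ℂ) →L[ℂ] ℂ) (f : (Fin n → ℂ) → ℂ), DifferentiableOn ℂ f Ω →
      (∀ s ∈ S, φ s = 0) →
      (m : ℕ∞) ≤ analyticOrderAt (fun r : ℂ => φ (rgC fun x => f (c + r • y x))) 0 := by
    intro m
    induction m with
    | zero => intros; simp
    | succ m ih =>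
      intro φ f hf hφ
      have ha := hdiff φ f hf 0 h0U
      have hz : φ (rgC fun x => f (c + (0 : ℂ) • y x)) = 0 := by
        apply hφ
        have : (rgC fun x => f (c + (0 : ℂ) • y x)) = algebraMap ℂ C(X, ℂ) (f c) := by
          ext x
          rw [rgC_apply (by simpa using continuous_const)]
          simp
        rw [this]
        exact S.algebraMap_mem _
      have h1 := ha.analyticOrderAt_deriv_add_one
      simp only [hz, sub_zero] at h1
      rw [← h1]
      push_cast
      gcongr
      let ψ : Fin n → C(X, ℂ) →L[ℂ] ℂ := fun i =>
        φ.comp (ContinuousLinearMap.mul ℂ C(X, ℂ) (rgCoord y i))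
      have hψ : ∀ i, ∀ s ∈ S, ψ i s = 0 := fun i s hs => hφ _ (S.mul_mem (hyS i) hs)
      have heq : deriv (fun r : ℂ => φ (rgC fun x => f (c + r • y x))) =ᶠ[𝓝 0]
          ∑ i, fun r : ℂ => ψ i (rgC fun x => pd i f (c + r • y x)) := by
        filter_upwards [hUo.mem_nhds h0U] with r hr
        have hd : HasDerivAt (fun r : ℂ => φ (rgC fun x => f (c + r • y x))) _ r :=
          φ.hasFDerivAt.comp_hasDerivAt r (rg_hasDerivAt hΩ hf y c r hr)
        rw [hd.deriv]
        simp [ψ, map_sum]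
      rw [analyticOrderAt_congr heq]
      refine Finset.sum_induction _ (fun h : ℂ → ℂ => (m : ℕ∞) ≤ analyticOrderAt h 0) ?_ ?_ ?_
      · intro a b ha hb
        exact (le_min ha hb).trans le_analyticOrderAt_add
      · have : analyticOrderAt (0 : ℂ → ℂ) 0 = ⊤ := analyticOrderAt_eq_top.2 (by simp)
        rw [this]; exact le_top
      · intro i _
        exact ih (ψ i) _ (rg_pd_diff hΩ hf i) (hψ i)
  refine rg_dual (Subalgebra.toSubmodule S) hS _ fun φ hφ => ?_
  have htop : analyticOrderAt (fun r : ℂ => φ (rgC fun x => f (c + r • y x))) 0 = ⊤ := by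
    refine ENat.eq_top_iff_forall_ge.2 fun m => hord m φ f hf hφ
  have hev := analyticOrderAt_eq_top.1 htop
  have hpre : IsPreconnected ((fun t : ℝ => (t : ℂ)) '' Icc (0 : ℝ) 1) :=
    isPreconnected_Icc.image _ (by fun_prop)
  have hEq := ((hdiff φ f hf).mono (by rintro _ ⟨t, ht, rfl⟩; exact hseg t ht) :
    AnalyticOnNhd ℂ _ ((fun t : ℝ => (t : ℂ)) '' Icc (0 : ℝ) 1)
    ).eqOn_zero_of_preconnected_of_eventuallyEq_zero hpre ⟨0, by simp, by simp⟩ hev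
  have := hEq ⟨1, by simp, rfl⟩
  simpa [hy] using this

lemma rg_chi {X : Type*} [TopologicalSpace X] [CompactSpace X]
    (S : Subalgebra ℂ C(X, ℂ)) (hS : IsClosed (S : Set C(X, ℂ))) (w : C(X, ℂ)) (hw : w ∈ S)
    (hre : ∀ x, (w x).re ≠ 0) :
    ∃ χ ∈ S, ∀ x, (0 < (w x).re → χ x = 1) ∧ ((w x).re < 0 → χ x = 0) := by
  have hneg : ∀ z : ℂ, z.re ≠ 0 → z ^ 2 ∈ Complex.slitPlane := by
    intro z hz
    rw [Complex.mem_slitPlane_iff]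
    by_cases him : z.im = 0
    · left
      have : (z ^ 2).re = z.re ^ 2 - z.im ^ 2 := by simp [pow_two]
      rw [this, him]
      have := sq_pos_of_ne_zero hz
      linarith
    · right
      have : (z ^ 2).im = 2 * (z.re * z.im) := by simp [pow_two]; ring
      rw [this]
      positivity
  let g : C(X, Fin 1 → ℂ) := ⟨fun x _ => w x ^ 2, by fun_prop⟩
  have key := rg_star S hS (Ω := {z : Fin 1 → ℂ | z 0 ∈ Complex.slitPlane})
    (c := fun _ => 1) (f := fun z => (z 0) ^ (-(2⁻¹ : ℂ)))
    (Complex.isOpen_slitPlane.preimage (by fun_prop))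
    (by
      intro z hz a b ha hb hab
      have := Complex.starConvex_one_slitPlane hz ha hb hab
      simpa using this)
    (by simp)
    (by
      intro z hz
      refine DifferentiableAt.differentiableWithinAt ?_
      refine DifferentiableAt.cpow (by fun_prop) (by fun_prop) hz) g
    (fun x => hneg _ (hre x))
    (fun i => by
      have : rgCoord g i = w ^ 2 := by ext x; simp [rgCoord, g]
      rw [this]
      exact S.pow_mem hw 2)
  have hval : ∀ x, (rgC fun x => (g x 0) ^ (-(2⁻¹ : ℂ))) x = ((w x ^ 2) ^ (2⁻¹ : ℂ))⁻¹ := by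
    intro x
    rw [rgC_apply, Complex.cpow_neg]
    · rfl
    · refine continuous_iff_continuousAt.2 fun x => ?_
      exact ContinuousAt.cpow (by fun_prop) (by fun_prop) (hneg _ (hre x))
  refine ⟨(2⁻¹ : ℂ) • (w * (rgC fun x => (g x 0) ^ (-(2⁻¹ : ℂ))) + 1),
    S.smul_mem (S.add_mem (S.mul_mem hw key) S.one_mem) _, fun x => ⟨fun h => ?_, fun h => ?_⟩⟩
  · have hne : w x ≠ 0 := by intro h0; simp [h0] at h
    simp only [ContinuousMap.smul_apply, ContinuousMap.add_apply, ContinuousMap.mul_apply,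
      ContinuousMap.one_apply, hval]
    rw [Complex.sq_cpow_two_inv h, mul_inv_cancel₀ hne]
    norm_num
  · have hne : w x ≠ 0 := by intro h0; simp [h0] at h
    simp only [ContinuousMap.smul_apply, ContinuousMap.add_apply, ContinuousMap.mul_apply,
      ContinuousMap.one_apply, hval]
    rw [← neg_sq, Complex.sq_cpow_two_inv (by simpa using h), inv_neg, mul_neg,
      mul_inv_cancel₀ hne]
    norm_num

lemma rg_piece {X : Type*} [TopologicalSpace X] [CompactSpace X] {n : ℕ}
    (S : Subalgebra ℂ C(X, ℂ)) (hS : IsClosed (S : Set C(X, ℂ)))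
    {Ω : Set (Fin n → ℂ)} (hΩ : IsOpen Ω) (hcv : Convex ℝ Ω)
    {f : (Fin n → ℂ) → ℂ} (hf : DifferentiableOn ℂ f Ω)
    (g : C(X, Fin n → ℂ)) (hgS : ∀ i, rgCoord g i ∈ S) (χ : C(X, ℂ)) (hχ : χ ∈ S)
    (h : ∀ x, χ x = 0 ∨ (χ x = 1 ∧ g x ∈ Ω)) :
    ∃ u ∈ S, ∀ x, u x = χ x * f (g x) := by
  by_cases hne : ∃ x₀, χ x₀ ≠ 0
  · obtain ⟨x₀, hx₀⟩ := hne
    obtain ⟨-, hc⟩ := (h x₀).resolve_left hx₀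
    set c := g x₀ with hcdef
    let k : C(X, Fin n → ℂ) := ⟨fun x => χ x • g x + (1 - χ x) • c, by fun_prop⟩
    have hk1 : ∀ x, χ x = 1 → k x = g x := fun x hx => by simp [k, hx]
    have hk : ∀ x, k x ∈ Ω := by
      intro x
      rcases h x with h0 | ⟨h1, h2⟩
      · simpa [k, h0] using hc
      · rw [hk1 x h1]; exact h2
    refine ⟨χ * rgC fun x => f (k x), S.mul_mem hχ
      (rg_star S hS hΩ (hcv.starConvex hc) hc hf k hk fun i => ?_), fun x => ?_⟩
    · have : rgCoord k i = χ * rgCoord g i + (1 - χ) * algebraMap ℂ C(X, ℂ) (c i) := by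
        ext x; simp [rgCoord, k]
      rw [this]
      exact S.add_mem (S.mul_mem hχ (hgS i))
        (S.mul_mem (S.sub_mem S.one_mem hχ) (S.algebraMap_mem _))
    · rw [ContinuousMap.mul_apply, rgC_apply (h := fun x => f (k x))
        (hf.continuousOn.comp_continuous (by fun_prop) hk)]
      rcases h x with h0 | ⟨h1, h2⟩
      · simp [h0]
      · rw [hk1 x h1]
  · push Not at hne
    exact ⟨0, S.zero_mem, fun x => by simp [hne x]⟩

lemma rg_approx (n : ℕ) (Ω₁ Ω₂ : Set (Fin n → ℂ))
    (hΩ₁o : IsOpen Ω₁) (hΩ₁cv : Convex ℝ Ω₁)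
    (hΩ₂o : IsOpen Ω₂) (hΩ₂cv : Convex ℝ Ω₂)
    (hdisj : Disjoint Ω₁ Ω₂)
    (f : (Fin n → ℂ) → ℂ) (hf : DifferentiableOn ℂ f (Ω₁ ∪ Ω₂))
    (K : Set (Fin n → ℂ)) (hK : IsCompact K) (hKsub : K ⊆ Ω₁ ∪ Ω₂) (ε : ℝ) (hε : 0 < ε) :
    ∃ Q : MvPolynomial (Fin n) ℂ, ∀ z ∈ K, ‖f z - mvEval Q z‖ < ε := by
  have : CompactSpace K := isCompact_iff_compactSpace.1 hK
  let g : C(K, Fin n → ℂ) := ⟨fun x => x.1, by fun_prop⟩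
  let A : MvPolynomial (Fin n) ℂ →ₐ[ℂ] C(K, ℂ) := MvPolynomial.aeval (rgCoord g)
  have hA : ∀ Q (x : K), A Q x = mvEval Q x.1 := by
    intro Q x
    induction Q using MvPolynomial.induction_on with
    | C a => simp [A, mvEval]
    | add p q hp hq =>
      simp only [mvEval] at hp hq
      simp [mvEval, hp, hq]
    | mul_X p i hp =>
      simp only [mvEval] at hp
      simp [mvEval, hp, A, rgCoord, g]
  let S : Subalgebra ℂ C(K, ℂ) := A.range.topologicalClosure
  have hS : IsClosed (S : Set C(K, ℂ)) := A.range.isClosed_topologicalClosure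
  have hgS : ∀ i, rgCoord g i ∈ S := fun i =>
    A.range.le_topologicalClosure ⟨MvPolynomial.X i, by simp [A]⟩
  obtain ⟨lam, u, h1, h2⟩ := RCLike.geometric_hahn_banach_open_open (𝕜 := ℂ) hΩ₁cv hΩ₁o hΩ₂cv hΩ₂o
    hdisj
  let w : C(K, ℂ) := ⟨fun x => lam x.1 - u, by fun_prop⟩
  have hw : w ∈ S := by
    have : w = (∑ i, lam (Pi.single i 1) • rgCoord g i) - algebraMap ℂ C(K, ℂ) (u : ℂ) := by
      ext x
      have hx : x.1 = ∑ i, x.1 i • (Pi.single i 1 : Fin n → ℂ) := by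
        ext j; simp [Finset.sum_apply, Pi.single_apply]
      have hl : lam x.1 = ∑ i, x.1 i * lam (Pi.single i 1) := by
        conv_lhs => rw [hx]
        simp [map_sum]
      simp [w, rgCoord, g, hl, mul_comm]
    rw [this]
    exact S.sub_mem (S.sum_mem fun i _ => S.smul_mem (hgS i) _) (S.algebraMap_mem _)
  have hw1 : ∀ x : K, x.1 ∈ Ω₁ → (w x).re < 0 := fun x hx => by
    have := h1 _ hx
    simpa [w] using this
  have hw2 : ∀ x : K, x.1 ∈ Ω₂ → 0 < (w x).re := fun x hx => by
    have := h2 _ hx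
    simpa [w] using this
  obtain ⟨χ, hχ, hχv⟩ := rg_chi S hS w hw (fun x => by
    rcases hKsub x.2 with h | h
    · exact (hw1 x h).ne
    · exact (hw2 x h).ne')
  have c1 : ∀ x : K, x.1 ∈ Ω₁ → χ x = 0 := fun x hx => (hχv x).2 (hw1 x hx)
  have c2 : ∀ x : K, x.1 ∈ Ω₂ → χ x = 1 := fun x hx => (hχv x).1 (hw2 x hx)
  obtain ⟨p, hp, hpv⟩ := rg_piece S hS hΩ₁o hΩ₁cv (hf.mono subset_union_left) g hgS (1 - χ)
    (S.sub_mem S.one_mem hχ) (fun x => by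
      rcases hKsub x.2 with h | h
      · right; exact ⟨by simp [c1 x h], h⟩
      · left; simp [c2 x h])
  obtain ⟨q, hq, hqv⟩ := rg_piece S hS hΩ₂o hΩ₂cv (hf.mono subset_union_right) g hgS χ hχ
    (fun x => by
      rcases hKsub x.2 with h | h
      · left; exact c1 x h
      · right; exact ⟨c2 x h, h⟩)
  have hpq : p + q ∈ closure (A.range : Set C(K, ℂ)) := S.add_mem hp hq
  obtain ⟨_, ⟨Q, rfl⟩, hQ⟩ := Metric.mem_closure_iff.1 hpq ε hε
  refine ⟨Q, fun z hz => ?_⟩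
  have h3 := (ContinuousMap.dist_apply_le_dist (f := p + q) (g := A Q) ⟨z, hz⟩).trans_lt hQ
  rw [hA, dist_eq_norm, ContinuousMap.add_apply, hpv, hqv] at h3
  have h4 : (1 - χ) ⟨z, hz⟩ * f (g ⟨z, hz⟩) + χ ⟨z, hz⟩ * f (g ⟨z, hz⟩) = f z := by
    simp only [ContinuousMap.sub_apply, ContinuousMap.one_apply]
    rw [← add_mul, sub_add_cancel, one_mul]
    rfl
  rwa [h4] at h3

/-- Operators that preserve holomorphy on `Ω` and are Lipschitz for local uniform bounds. -/
def RgGood {n : ℕ} (Ω : Set (Fin n → ℂ)) (T : ((Fin n → ℂ) → ℂ) → ((Fin n → ℂ) → ℂ)) : Prop :=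
  (∀ h, DifferentiableOn ℂ h Ω → DifferentiableOn ℂ (T h) Ω) ∧
  ∀ L, IsCompact L → L ⊆ Ω → ∃ K, IsCompact K ∧ K ⊆ Ω ∧ ∃ C : ℝ,
    ∀ h₁ h₂, DifferentiableOn ℂ h₁ Ω → DifferentiableOn ℂ h₂ Ω → ∀ M : ℝ,
      (∀ z ∈ K, ‖h₁ z - h₂ z‖ ≤ M) → ∀ z ∈ L, ‖T h₁ z - T h₂ z‖ ≤ C * M

lemma RgGood.id {n : ℕ} (Ω : Set (Fin n → ℂ)) : RgGood Ω (fun h => h) :=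
  ⟨fun _ hh => hh, fun L hL hLs => ⟨L, hL, hLs, 1, fun _ _ _ _ M hM z hz => by
    simpa using hM z hz⟩⟩

lemma RgGood.comp {n : ℕ} {Ω : Set (Fin n → ℂ)} {T₁ T₂} (h₁ : RgGood Ω T₁) (h₂ : RgGood Ω T₂) :
    RgGood Ω (fun h => T₁ (T₂ h)) := by
  refine ⟨fun h hh => h₁.1 _ (h₂.1 _ hh), fun L hL hLs => ?_⟩
  obtain ⟨K₁, hK₁, hK₁s, C₁, hC₁⟩ := h₁.2 L hL hLs
  obtain ⟨K₂, hK₂, hK₂s, C₂, hC₂⟩ := h₂.2 K₁ hK₁ hK₁s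
  refine ⟨K₂, hK₂, hK₂s, C₁ * C₂, fun a b ha hb M hM z hz => ?_⟩
  rw [mul_assoc]
  exact hC₁ _ _ (h₂.1 _ ha) (h₂.1 _ hb) _ (hC₂ a b ha hb M hM) z hz

lemma RgGood.pd {n : ℕ} {Ω : Set (Fin n → ℂ)} (hΩ : IsOpen Ω) (i : Fin n) : RgGood Ω (pd i) := by
  refine ⟨fun h hh => rg_pd_diff hΩ hh i, fun L hL hLs => ?_⟩
  obtain ⟨δ, hδ, hδs⟩ := hL.exists_cthickening_subset_open hΩ hLs
  refine ⟨_, hL.cthickening (r := δ), hδs, 2 / δ, fun a b ha hb M hM z hz => ?_⟩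
  have hball : Metric.ball z δ ⊆ Metric.cthickening δ L :=
    (Metric.ball_subset_thickening hz δ).trans (Metric.thickening_subset_cthickening _ _)
  have hz' : Ω ∈ 𝓝 z := hΩ.mem_nhds (hLs hz)
  have h1 := rg_fderiv_bound (f := a - b) hδ ((ha.sub hb).mono (hball.trans hδs))
    (fun y hy => hM y (hball hy))
  rw [fderiv_sub (ha.differentiableAt hz') (hb.differentiableAt hz')] at h1
  have h2 := (fderiv ℂ a z - fderiv ℂ b z).le_opNorm (Pi.single i 1)
  rw [Pi.norm_single, norm_one, mul_one] at h2
  refine (h2.trans h1).trans_eq ?_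
  ring

lemma RgGood.dml {n : ℕ} {Ω : Set (Fin n → ℂ)} (hΩ : IsOpen Ω) (ℓ : Fin n → ℕ) :
    RgGood Ω (Dml ℓ) := by
  have hit : ∀ (i : Fin n) (m : ℕ), RgGood Ω fun h => (_root_.pd i)^[m] h := by
    intro i m
    induction m with
    | zero => exact RgGood.id Ω
    | succ m ih =>
      simp only [Function.iterate_succ_apply']
      exact (RgGood.pd hΩ i).comp ih
  have : ∀ l : List (Fin n),
      RgGood Ω fun h => l.foldr (fun i g => (_root_.pd i)^[ℓ i] g) h := by
    intro l
    induction l with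
    | nil => exact RgGood.id Ω
    | cons i l ih => exact (hit i (ℓ i)).comp ih
  exact this _

lemma rg_mvEval_diff {n : ℕ} (Q : MvPolynomial (Fin n) ℂ) : Differentiable ℂ (mvEval Q) := by
  induction Q using MvPolynomial.induction_on with
  | C a =>
    have : mvEval (MvPolynomial.C a : MvPolynomial (Fin n) ℂ) = fun z => a := by
      ext z; simp [mvEval]
    rw [this]; exact differentiable_const a
  | add p q hp hq =>
    have : mvEval (p + q) = fun z => mvEval p z + mvEval q z := by ext z; simp [mvEval]
    rw [this]; exact hp.fun_add hq
  | mul_X p i hp =>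
    have : mvEval (p * MvPolynomial.X i) = fun z => mvEval p z * z i := by ext z; simp [mvEval]
    rw [this]; exact hp.fun_mul (by fun_prop)

/-- polynomial approximation together with finitely many partial
derivatives, on compact subsets of a union of two disjoint open convex sets. -/
theorem runge_union_two_open_convex_with_derivs (n : ℕ) (Ω₁ Ω₂ : Set (Fin n → ℂ))
    (hΩ₁o : IsOpen Ω₁) (hΩ₁cv : Convex ℝ Ω₁)
    (hΩ₂o : IsOpen Ω₂) (hΩ₂cv : Convex ℝ Ω₂)
    (hdisj : Disjoint Ω₁ Ω₂)
    (f : (Fin n → ℂ) → ℂ) (hf : DifferentiableOn ℂ f (Ω₁ ∪ Ω₂))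
    (L : Set (Fin n → ℂ)) (hLcpt : IsCompact L) (hLsub : L ⊆ Ω₁ ∪ Ω₂)
    (F : Finset (Fin n → ℕ)) (ε : ℝ) (hε : 0 < ε) :
    ∃ Q : MvPolynomial (Fin n) ℂ, ∀ ℓ ∈ F, ∀ z ∈ L, ‖Dml ℓ f z - Dml ℓ (mvEval Q) z‖ < ε := by
  have hgood := fun ℓ : Fin n → ℕ =>
    (RgGood.dml (hΩ₁o.union hΩ₂o) ℓ).2 L hLcpt hLsub
  choose K hK hKs C hC using hgood
  have hKc : IsCompact (⋃ ℓ ∈ F, K ℓ) := F.isCompact_biUnion fun ℓ _ => hK ℓ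
  have hpos : 0 < 1 + ∑ ℓ ∈ F, |C ℓ| := by positivity
  obtain ⟨Q, hQ⟩ := rg_approx n Ω₁ Ω₂ hΩ₁o hΩ₁cv hΩ₂o hΩ₂cv hdisj f hf _ hKc
    (by simpa using fun ℓ _ => hKs ℓ) (ε / (1 + ∑ ℓ ∈ F, |C ℓ|)) (by positivity)
  refine ⟨Q, fun ℓ hℓ z hz => ?_⟩
  refine (hC ℓ f (mvEval Q) hf (rg_mvEval_diff Q).differentiableOn
    (ε / (1 + ∑ ℓ ∈ F, |C ℓ|)) (fun y hy => (hQ y ?_).le) z hz).trans_lt ?_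
  · simp only [mem_iUnion]
    exact ⟨ℓ, hℓ, hy⟩
  · have h1 : |C ℓ| ≤ ∑ ℓ ∈ F, |C ℓ| :=
      Finset.single_le_sum (f := fun ℓ => |C ℓ|) (fun _ _ => abs_nonneg _) hℓ
    have h2 := le_abs_self (C ℓ)
    rw [mul_div_assoc', div_lt_iff₀ hpos, mul_comm]
    gcongr
    linarith


end
end

section
/- Let Ω ⊆ ℂⁿ be a convex open set. Then the holomorphic polynomials are dense in O(Ω) for the topology of uniform convergence on compact sets: for every holomorphic function f on Ω, every compact set L ⊆ Ω, and every ε > 0, there exists a holomorphic polynomial Q on ℂⁿ with sup_{z ∈ L} ‖f(z) − Q(z)‖ < ε. -/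
open Set Filter Topology

noncomputable section

/-- A closed subalgebra contains `(s - v)⁻¹` whenever it contains `v` and `‖v‖ < ‖s‖`. -/
lemma aux_inv_mem {X : Type*} [TopologicalSpace X] [CompactSpace X]
    (W : Subalgebra ℂ C(X, ℂ)) (hW : IsClosed (W : Set C(X, ℂ)))
    (v : C(X, ℂ)) (hv : v ∈ W) (s : ℂ) (hs : ‖v‖ < ‖s‖)
    (h : C(X, ℂ)) (hh : ∀ x, h x = (s - v x)⁻¹) : h ∈ W := by
  have hs0 : 0 < ‖s‖ := (norm_nonneg v).trans_lt hs
  have hsne : s ≠ 0 := norm_pos_iff.mp hs0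
  have hn : ‖s⁻¹ • v‖ < 1 := by
    rw [norm_smul, norm_inv, inv_mul_lt_iff₀ hs0]; simpa using hs
  have hsum : Summable (fun i : ℕ => (s⁻¹ • v) ^ i) := summable_geometric_of_norm_lt_one hn
  have hmem : (∑' i : ℕ, (s⁻¹ • v) ^ i) ∈ W := by
    refine hW.mem_of_tendsto hsum.hasSum (Eventually.of_forall fun F => ?_)
    exact Subalgebra.sum_mem _ fun i _ => Subalgebra.pow_mem _ (Subalgebra.smul_mem _ hv _) _
  have hmul := mul_neg_geom_series (s⁻¹ • v) hn
  have : h = s⁻¹ • ∑' i : ℕ, (s⁻¹ • v) ^ i := by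
    ext x
    have hx := DFunLike.congr_fun hmul x
    simp only [ContinuousMap.mul_apply, ContinuousMap.sub_apply, ContinuousMap.one_apply,
      ContinuousMap.smul_apply, smul_eq_mul] at hx
    rw [hh, ContinuousMap.smul_apply, smul_eq_mul]
    apply inv_eq_of_mul_eq_one_right
    rw [← hx]
    field_simp
  rw [this]
  exact Subalgebra.smul_mem _ hmem _

/-- Interval integrals of continuous functions with values in a closed subspace stay there. -/
lemma aux_integral_mem {E : Type*} [NormedAddCommGroup E] [NormedSpace ℂ E] [CompleteSpace E]
    (W : Submodule ℂ E) (hW : IsClosed (W : Set E)) (H : ℝ → E) (hH : Continuous H)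
    (hm : ∀ t, H t ∈ W) (a b : ℝ) : (∫ t in a..b, H t) ∈ W := by
  haveI := hW
  have h1 := ContinuousLinearMap.intervalIntegral_comp_comm (W.mkQL)
    (hH.intervalIntegrable (μ := MeasureTheory.volume) a b)
  have h2 : ∀ t, W.mkQL (H t) = 0 := fun t => (Submodule.Quotient.mk_eq_zero W).mpr (hm t)
  simp only [h2, intervalIntegral.integral_zero] at h1
  exact (Submodule.Quotient.mk_eq_zero W).mp h1.symm

/-- A small polydisc functional calculus: a holomorphic function of elements of a closed
subalgebra of `C(X)` belongs to that subalgebra. -/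
lemma aux_polydisc {n : ℕ} {X : Type*} [TopologicalSpace X] [CompactSpace X]
    (W : Subalgebra ℂ C(X, ℂ)) (hW : IsClosed (W : Set C(X, ℂ)))
    (u : Fin n → C(X, ℂ)) (hu : ∀ i, u i ∈ W) (c : Fin n → ℂ) (ρ : ℝ) (hρ : 0 < ρ)
    (hc : ∀ i, ‖u i - algebraMap ℂ C(X, ℂ) (c i)‖ < ρ)
    (f : (Fin n → ℂ) → ℂ) (hf : DifferentiableOn ℂ f (Metric.closedBall c ρ))
    (S : Finset (Fin n)) :
    ∀ ζ ∈ Metric.closedBall c ρ, ∀ g : C(X, ℂ),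
      (∀ x, g x = f (S.piecewise (fun i => u i x) ζ)) → g ∈ W := by
  have hux : ∀ i x, ‖u i x - c i‖ < ρ := fun i x =>
    ((u i - algebraMap ℂ C(X, ℂ) (c i)).norm_coe_le_norm x).trans_lt (hc i)
  have hball : ∀ w : Fin n → ℂ, w ∈ Metric.closedBall c ρ ↔ ∀ i, ‖w i - c i‖ ≤ ρ := by
    intro w
    rw [Metric.mem_closedBall, dist_pi_le_iff hρ.le]
    simp [dist_eq_norm]
  induction S using Finset.induction_on with
  | empty =>
    intro ζ hζ g hg
    have : g = algebraMap ℂ C(X, ℂ) (f ζ) := by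
      ext x; rw [hg]; simp
    rw [this]; exact Subalgebra.algebraMap_mem _ _
  | insert k S hk ih =>
    intro ζ hζ g hg
    set b : X → Fin n → ℂ := fun x => S.piecewise (fun i => u i x) ζ with hb
    have hbc : Continuous b := by
      refine continuous_pi fun i => ?_
      by_cases hi : i ∈ S
      · simpa [hb, hi] using (u i).continuous
      · simpa [hb, hi] using continuous_const
    have hbb : ∀ x i, ‖b x i - c i‖ ≤ ρ := by
      intro x i
      by_cases hi : i ∈ S
      · simpa [hb, hi] using (hux i x).le
      · simpa [hb, hi] using (hball ζ).mp hζ i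
    have hupd : ∀ x w, ‖w - c k‖ ≤ ρ → Function.update (b x) k w ∈ Metric.closedBall c ρ := by
      intro x w hw
      rw [hball]
      intro i
      by_cases hi : i = k
      · subst hi; simpa using hw
      · simpa [hi] using hbb x i
    let s : ℝ → ℂ := circleMap (c k) ρ
    have hsn : ∀ θ, ‖s θ - c k‖ = ρ := fun θ => by
      simp [s, circleMap, abs_of_pos hρ]
    have hsc : Continuous s := continuous_circleMap _ _
    have hA : Continuous (fun p : ℝ × X => f (Function.update (b p.2) k (s p.1))) := by
      refine hf.continuousOn.comp_continuous ?_ fun p => hupd _ _ (hsn _).le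
      exact (hbc.comp continuous_snd).update k (hsc.comp continuous_fst)
    have hne : ∀ θ x, s θ - u k x ≠ 0 := by
      intro θ x h0
      have h1 := hux k x
      rw [← sub_eq_zero.mp h0, hsn] at h1
      exact lt_irrefl _ h1
    have hB : Continuous (fun p : ℝ × X => (s p.1 - u k p.2)⁻¹) := by
      refine Continuous.inv₀ ?_ fun p => hne _ _
      exact (hsc.comp continuous_fst).sub ((u k).continuous.comp continuous_snd)
    let A : C(ℝ × X, ℂ) := ⟨_, hA⟩
    let B : C(ℝ × X, ℂ) := ⟨_, hB⟩
    have hAm : ∀ θ, A.curry θ ∈ W := by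
      intro θ
      refine ih (Function.update ζ k (s θ)) ?_ _ ?_
      · rw [hball]
        intro i
        by_cases hi : i = k
        · subst hi; simpa using (hsn θ).le
        · simpa [hi] using (hball ζ).mp hζ i
      · intro x
        change f (Function.update (b x) k (s θ)) = _
        congr 1
        ext i
        by_cases hi : i = k
        · subst hi; simp [hk]
        · by_cases hiS : i ∈ S <;> simp [hb, hi, hiS]
    have hBm : ∀ θ, B.curry θ ∈ W := by
      intro θ
      refine aux_inv_mem W hW (u k - algebraMap ℂ C(X, ℂ) (c k))
        (Subalgebra.sub_mem _ (hu k) (Subalgebra.algebraMap_mem _ _)) (s θ - c k) ?_ _ ?_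
      · rw [hsn]; exact hc k
      · intro x
        change (s θ - u k x)⁻¹ = _
        simp
    let H : ℝ → C(X, ℂ) := fun θ => (deriv s θ) • (B.curry θ * A.curry θ)
    have hHc : Continuous H := by
      have hds : Continuous (deriv s) := by
        have : deriv s = fun θ => circleMap 0 ρ θ * Complex.I := by
          ext θ; simp [s]
        rw [this]
        exact (continuous_circleMap _ _).mul continuous_const
      exact hds.smul (B.curry.continuous.mul A.curry.continuous)
    have hHm : ∀ θ, H θ ∈ W := fun θ =>
      Subalgebra.smul_mem _ (Subalgebra.mul_mem _ (hBm θ) (hAm θ)) _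
    have hint : (∫ θ in (0 : ℝ)..2 * Real.pi, H θ) ∈ W :=
      aux_integral_mem (Subalgebra.toSubmodule W) hW H hHc hHm _ _
    have hg' : g = (2 * Real.pi * Complex.I : ℂ)⁻¹ • ∫ θ in (0 : ℝ)..2 * Real.pi, H θ := by
      ext x
      have hev := ContinuousLinearMap.intervalIntegral_comp_comm
        (ContinuousMap.evalCLM ℂ x : C(X, ℂ) →L[ℂ] ℂ)
        (hHc.intervalIntegrable (μ := MeasureTheory.volume) 0 (2 * Real.pi))
      have hd : DifferentiableOn ℂ (fun w => f (Function.update (b x) k w))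
          (Metric.closedBall (c k) ρ) := by
        refine hf.comp (fun w _ => ?_) fun w hw => hupd x w ?_
        · exact (hasFDerivAt_update (𝕜 := ℂ) (b x) w).differentiableAt.differentiableWithinAt
        · simpa [dist_eq_norm] using hw
      have hC := hd.circleIntegral_sub_inv_smul (w := u k x)
        (by simpa [dist_eq_norm] using hux k x)
      have hE : (∮ z in C(c k, ρ), (z - u k x)⁻¹ • f (Function.update (b x) k z))
          = ∫ θ in (0 : ℝ)..2 * Real.pi, (ContinuousMap.evalCLM ℂ x : C(X, ℂ) →L[ℂ] ℂ) (H θ) := by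
        rfl
      rw [hE, hev] at hC
      have hC' : (∫ θ in (0 : ℝ)..2 * Real.pi, H θ) x
          = (2 * Real.pi * Complex.I : ℂ) • f (Function.update (b x) k (u k x)) := hC
      rw [ContinuousMap.smul_apply, hC', inv_smul_smul₀ Complex.two_pi_I_ne_zero, hg,
        Finset.piecewise_insert]
    rw [hg']
    exact Subalgebra.smul_mem _ hint _

/-- A continuous, pointwise holomorphic map into `C(X)` is analytic. -/
lemma aux_analytic {X : Type*} [TopologicalSpace X] [CompactSpace X] (V : Set ℂ) (hV : IsOpen V)
    (G : ℂ → C(X, ℂ)) (hG : ContinuousOn G V)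
    (hd : ∀ x, DifferentiableOn ℂ (fun t => G t x) V) : AnalyticOnNhd ℂ G V := by
  intro c hcV
  obtain ⟨R, hR, hRV⟩ := Metric.nhds_basis_closedBall.mem_iff.mp (hV.mem_nhds hcV)
  lift R to NNReal using hR.le
  have hci : CircleIntegrable G c R :=
    ((hG.mono hRV).mono Metric.sphere_subset_closedBall).circleIntegrable R.coe_nonneg
  have hps := hasFPowerSeriesOn_cauchy_integral hci (by exact_mod_cast hR)
  refine AnalyticAt.congr hps.analyticAt ?_
  filter_upwards [Metric.ball_mem_nhds c hR] with w hw
  ext x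
  have hC := ((hd x).mono hRV).circleIntegral_sub_inv_smul hw
  have hcont : Continuous (fun θ : ℝ => deriv (circleMap c R) θ •
      (circleMap c R θ - w)⁻¹ • G (circleMap c R θ)) := by
    have h1 : Continuous (deriv (circleMap c R)) := by
      have : deriv (circleMap c R) = fun θ => circleMap 0 R θ * Complex.I := by
        ext θ; simp
      rw [this]
      exact (continuous_circleMap _ _).mul continuous_const
    have h2 : Continuous (fun θ : ℝ => (circleMap c R θ - w)⁻¹) := by
      refine ((continuous_circleMap _ _).sub continuous_const).inv₀ fun θ => ?_
      exact sub_ne_zero.mpr (circleMap_ne_mem_ball hw θ)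
    have h3 : Continuous (fun θ : ℝ => G (circleMap c R θ)) :=
      hG.comp_continuous (continuous_circleMap _ _)
        fun θ => hRV (circleMap_mem_closedBall c R.coe_nonneg θ)
    exact h1.smul (h2.smul h3)
  have hev := ContinuousLinearMap.intervalIntegral_comp_comm
    (ContinuousMap.evalCLM ℂ x : C(X, ℂ) →L[ℂ] ℂ)
    (hcont.intervalIntegrable (μ := MeasureTheory.volume) 0 (2 * Real.pi))
  have hE : (∮ z in C(c, R), (z - w)⁻¹ • G z x)
      = (∮ z in C(c, R), (z - w)⁻¹ • G z) x := by
    exact hev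
  rw [ContinuousMap.smul_apply, ← hE, hC, inv_smul_smul₀ Complex.two_pi_I_ne_zero]

/-- polynomials are dense in `O(Ω)` for convex open `Ω`, for the topology of
uniform convergence on compact sets. -/
theorem polynomials_dense_in_O_of_convex (n : ℕ) (Ω : Set (Fin n → ℂ))
    (hΩo : IsOpen Ω) (hΩcv : Convex ℝ Ω)
    (f : (Fin n → ℂ) → ℂ) (hf : DifferentiableOn ℂ f Ω)
    (L : Set (Fin n → ℂ)) (hLcpt : IsCompact L) (hLsub : L ⊆ Ω)
    (ε : ℝ) (hε : 0 < ε) :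
    ∃ Q : MvPolynomial (Fin n) ℂ, ∀ z ∈ L, ‖f z - mvEval Q z‖ < ε := by
  classical
  rcases L.eq_empty_or_nonempty with rfl | ⟨x0, hx0⟩
  · exact ⟨0, by simp⟩
  haveI : CompactSpace L := isCompact_iff_compactSpace.mp hLcpt
  -- the closure of the polynomials in `C(L)`
  let e : Fin n → C(L, ℂ) := fun i => ⟨fun z => z.1 i, (continuous_apply i).comp continuous_subtype_val⟩
  let P : Subalgebra ℂ C(L, ℂ) := (MvPolynomial.aeval e : MvPolynomial (Fin n) ℂ →ₐ[ℂ] _).range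
  let W : Subalgebra ℂ C(L, ℂ) := P.topologicalClosure
  have hW : IsClosed (W : Set C(L, ℂ)) := P.isClosed_topologicalClosure
  have he : ∀ i, e i ∈ W := fun i =>
    P.le_topologicalClosure ⟨MvPolynomial.X i, by simp⟩
  -- the dilations
  let m : ℂ → (Fin n → ℂ) → (Fin n → ℂ) := fun t z => x0 + t • (z - x0)
  have hmc : Continuous (fun p : ℂ × (Fin n → ℂ) => m p.1 p.2) := by
    simp only [m]; fun_prop
  let V : Set ℂ := {t | ∀ z ∈ L, m t z ∈ Ω}
  have hVo : IsOpen V := by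
    rw [isOpen_iff_eventually]
    intro t ht
    refine hLcpt.eventually_forall_of_forall_eventually fun z hz => ?_
    exact hmc.continuousAt.eventually (hΩo.mem_nhds (ht z hz))
  have hVc : Convex ℝ V := by
    intro s hs t ht a b ha hb hab z hz
    have := hΩcv (hs z hz) (ht z hz) ha hb hab
    convert this using 1
    ext i
    have hab' : (a : ℂ) + b = 1 := by exact_mod_cast hab
    simp only [m, Pi.add_apply, Pi.smul_apply, Pi.sub_apply, smul_eq_mul, Complex.real_smul]
    linear_combination (-x0 i) * hab'
  have h0V : (0 : ℂ) ∈ V := fun z _ => by simpa [m] using hLsub hx0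
  have h1V : (1 : ℂ) ∈ V := fun z hz => by simpa [m] using hLsub hz
  have hFc : Continuous (fun p : V × L => f (m p.1 p.2)) := by
    refine hf.continuousOn.comp_continuous ?_ fun p => p.1.2 _ p.2.2
    exact hmc.comp ((continuous_subtype_val.comp continuous_fst).prodMk
      (continuous_subtype_val.comp continuous_snd))
  let F : C(V × L, ℂ) := ⟨_, hFc⟩
  let G : ℂ → C(L, ℂ) := fun t => if h : t ∈ V then F.curry ⟨t, h⟩ else 0
  have hGx : ∀ t ∈ V, ∀ z : L, G t z = f (m t z) := by
    intro t ht z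
    simp only [G, dif_pos ht]
    rfl
  have hGc : ContinuousOn G V := by
    rw [continuousOn_iff_continuous_domRestrict]
    have : V.domRestrict G = F.curry := by
      ext t z
      exact hGx t.1 t.2 z
    rw [this]
    exact F.curry.continuous
  have hGd : ∀ z : L, DifferentiableOn ℂ (fun t => G t z) V := by
    intro z
    have : DifferentiableOn ℂ (fun t => f (m t z)) V := by
      refine hf.comp (g := f) (f := fun t => m t z) ?_ fun t ht => ht _ z.2
      simp only [m]
      fun_prop
    exact this.congr fun t ht => hGx t ht z
  have hGa := aux_analytic V hVo G hGc hGd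
  -- near `0`, `G t` is a limit of polynomials
  obtain ⟨ρ, hρ, hρΩ⟩ := Metric.nhds_basis_closedBall.mem_iff.mp (hΩo.mem_nhds (hLsub hx0))
  have hsmall : ∀ᶠ t in 𝓝 (0 : ℂ), G t ∈ W := by
    have h1 : ∀ᶠ t in 𝓝 (0 : ℂ), ∀ i, ‖t • (e i - algebraMap ℂ C(L, ℂ) (x0 i))‖ < ρ := by
      rw [eventually_all]
      intro i
      have hc : Continuous fun t : ℂ => ‖t • (e i - algebraMap ℂ C(L, ℂ) (x0 i))‖ := by fun_prop
      exact hc.continuousAt.eventually_lt continuousAt_const (by simpa using hρ)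
    filter_upwards [h1, hVo.mem_nhds h0V] with t ht htV
    refine aux_polydisc W hW
      (fun i => algebraMap ℂ C(L, ℂ) (x0 i) + t • (e i - algebraMap ℂ C(L, ℂ) (x0 i)))
      (fun i => ?_) x0 ρ hρ (fun i => ?_) f (hf.mono hρΩ) Finset.univ x0
      (Metric.mem_closedBall_self hρ.le) _ fun z => ?_
    · exact Subalgebra.add_mem _ (Subalgebra.algebraMap_mem _ _) (Subalgebra.smul_mem _
        (Subalgebra.sub_mem _ (he i) (Subalgebra.algebraMap_mem _ _)) _)
    · rw [add_sub_cancel_left]; exact ht i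
    · rw [hGx t htV]
      congr 1
      ext i
      simp [m, e]
  -- identity theorem in the quotient
  haveI : IsClosed ((Subalgebra.toSubmodule W : Submodule ℂ C(L, ℂ)) : Set C(L, ℂ)) := hW
  have hqa : AnalyticOnNhd ℂ (fun t => (Subalgebra.toSubmodule W).mkQL (G t)) V :=
    (Subalgebra.toSubmodule W).mkQL.comp_analyticOnNhd hGa
  have hz := hqa.eqOn_zero_of_preconnected_of_eventuallyEq_zero hVc.isPreconnected h0V
    (hsmall.mono fun t ht => (Submodule.Quotient.mk_eq_zero (Subalgebra.toSubmodule W)).mpr ht) h1V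
  have hG1 : G 1 ∈ W := (Submodule.Quotient.mk_eq_zero (Subalgebra.toSubmodule W)).mp hz
  have hG1' : G 1 ∈ closure (P : Set C(L, ℂ)) := hG1
  obtain ⟨q, ⟨Q, hQ⟩, hq⟩ := Metric.mem_closure_iff.mp hG1' ε hε
  refine ⟨Q, fun z hz => ?_⟩
  have h2 : G 1 ⟨z, hz⟩ = f z := by rw [hGx 1 h1V]; simp [m]
  have h3 : q ⟨z, hz⟩ = mvEval Q z := by
    rw [← hQ]
    change (ContinuousMap.evalAlgHom ℂ ℂ (⟨z, hz⟩ : L)) (MvPolynomial.aeval e Q) = _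
    rw [← AlgHom.comp_apply, MvPolynomial.comp_aeval, mvEval, ← MvPolynomial.coe_aeval_eq_eval]
    rfl
  rw [← h2, ← h3, ← dist_eq_norm]
  exact (ContinuousMap.dist_apply_le_dist _).trans_lt hq

end
end
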